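/- arXiv:2602.08176 — 2 statements merged into one kernel-verified Lean document; each statement's English description precedes it below -/
import Mathlib

section
/- For every w ∈ 𝔥^{≥2} one has δ(der(w)) − der(δ(w)) = W(w), i.e. the commutator [δ, der] equals the weight operator W on 𝔥^{≥2}. (Here δ maps 𝔥^{≥2} into itself: on a word z_{k₁}⋯z_{k_r} with all k_i ≥ 2, δ gives −½·z_{k₂}⋯z_{k_r} if k₁ = 2 and 0 otherwise; and der maps 𝔥^{≥2} into 𝔥^{≥2}.) -/
/-!
On `𝔥^{≥2}` words contain no factor `yy` and do not begin with `y`, so there `δ = −½ S`, where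
`S(xyu) = u` and `S` kills words that do not begin with `xy` (on subscripts, `S` strips a leading
`z₂`; this version is written `T`). The claim therefore amounts to
`S(der w) = −2 wt(w) w + [w = z₂w'] der w'` for words `w` of `𝔥^{≥2}` (`Tm_dW`).

Let `G` be the sum over all replacements of a factor `yyx` by `y` minus the sum over all replacements
of a factor `xyy` by `y`. The heart of the proof is the identity `S ∘ 𝒟 = 𝒟 ∘ (G + S)` on words that
begin with `x` and end with `y` (`Sm_Dm`). All values of `𝔇` on nonempty tuples are combinations of
words beginning with `x`, so the words of `𝔇(𝐜)` beginning with `xy` come from the last two sums of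
the recursion with `#A + #B = 2`. These two sums have opposite signs, and the choices of `A` and `B`
that are admissible in both cancel. What is left decreases, or deletes, a pair of neighbouring entries
of `𝐜` (`Sm_DropD`), and in terms of words these operations add up to `G + S` (`AD_eq`).

The other ingredients, for `w` in `𝔥^{≥2}`, are
* `G(w ⧢ xy) = −2 wt(w) w` and `S(w ⧢ xy) = w + [w = xyu] u ⧢ xy` (`Gm_ins2`, `Sm_ins2`),
* `T(w * z₂) = w + [w = z₂w'] w' * z₂` (`Tm_hmulW`),
* `𝒟(w) = w` (`Drop1W_self`), again by cancellation in the recursion.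

Applying `S ∘ 𝒟 = 𝒟 ∘ (G + S)` to `w ⧢ z₂`, and `𝒟 = id` to `w * z₂`, the two copies of `w` cancel and
the formula for `S(der w)` results.

The sums over `A` and `B` in the recursion are evaluated pair by pair of neighbouring positions: the
conditions on `A` and `B` only relate the two positions of a pair (`sum_pair`, `sum_EOs`).
-/

open scoped Classical BigOperators

noncomputable section

/-- The underlying space of `𝔥¹ = ℚ⟨z₁, z₂, …⟩`: formal ℚ-linear combinations of words,
a word being encoded by the list of subscripts `[k₁, …, k_r]` of `z_{k₁} ⋯ z_{k_r}`. -/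
abbrev H : Type := List ℕ →₀ ℚ

/-- The space of ℚ-linear combinations of words in the two letters `x` (= `false`)
and `y` (= `true`). -/
abbrev Bw : Type := List Bool →₀ ℚ

/-- The word `z_{k₁} ⋯ z_{k_r}` as an element of `H`. -/
def zw (l : List ℕ) : H := Finsupp.single l 1

/-- Membership in `𝔥¹` (all subscripts ≥ 1). -/
def isH1 (w : H) : Prop := ∀ l ∈ w.support, ∀ k ∈ l, 1 ≤ k

/-- Membership in `𝔥^{≥2}` (all subscripts ≥ 2). -/
def isH2 (w : H) : Prop := ∀ l ∈ w.support, ∀ k ∈ l, 2 ≤ k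

/-- Membership in `𝔥⁰` (first subscript ≥ 2, all others ≥ 1). -/
def isH0 (w : H) : Prop :=
  ∀ l ∈ w.support, (∀ k ∈ l, 1 ≤ k) ∧ ∀ k, l.head? = some k → 2 ≤ k

/-- The harmonic product on words. -/
def hmulW : List ℕ → List ℕ → H
  | [], v => Finsupp.single v 1
  | k :: u, [] => Finsupp.single (k :: u) 1
  | k :: u, l :: v =>
      Finsupp.mapDomain (k :: ·) (hmulW u (l :: v)) +
      Finsupp.mapDomain (l :: ·) (hmulW (k :: u) v) +
      Finsupp.mapDomain ((k + l) :: ·) (hmulW u v)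
  termination_by u v => u.length + v.length

/-- The harmonic product `*` on `𝔥¹`. -/
def hmul (u v : H) : H := u.sum fun a ca => v.sum fun b cb => (ca * cb) • hmulW a b

/-- The shuffle product on words in the letters `x, y`. -/
def shW : List Bool → List Bool → Bw
  | [], v => Finsupp.single v 1
  | a :: u, [] => Finsupp.single (a :: u) 1
  | a :: u, b :: v =>
      Finsupp.mapDomain (a :: ·) (shW u (b :: v)) +
      Finsupp.mapDomain (b :: ·) (shW (a :: u) v)
  termination_by u v => u.length + v.length

/-- The identification `z_k = x^{k-1} y`. -/
def toXY (l : List ℕ) : List Bool :=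
  (l.map fun k => List.replicate (k - 1) false ++ [true]).flatten

def fromXYAux : List Bool → ℕ → List ℕ
  | [], _ => []
  | false :: t, c => fromXYAux t (c + 1)
  | true :: t, c => (c + 1) :: fromXYAux t 0

/-- Parse a word in `x, y` (ending in `y`) back into a word `z_{k₁} ⋯ z_{k_r}`. -/
def fromXY (l : List Bool) : List ℕ := fromXYAux l 0

def shmulW (a b : List ℕ) : H := Finsupp.mapDomain fromXY (shW (toXY a) (toXY b))

/-- The shuffle product `⧢` on `𝔥¹` (via the identification `z_k = x^{k-1}y`). -/
def shmul (u v : H) : H := u.sum fun a ca => v.sum fun b cb => (ca * cb) • shmulW a b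

/-- `φ(w) = w * z₂ − w ⧢ z₂`. -/
def phi (w : H) : H := hmul w (zw [2]) - shmul w (zw [2])

/-- `R(u,v) = φ(u*v) − φ(u)*v − u*φ(v)`. -/
def Rop (u v : H) : H := phi (hmul u v) - hmul (phi u) v - hmul u (phi v)

/-- The weight operator `W`. -/
def Wop (w : H) : H := w.sum fun a c => Finsupp.single a (c * (a.sum : ℚ))

/-- `Σ_{w = u'(p)u''} u' y u''`: replace one occurrence of the factor `p` by `y`. -/
def replaceOcc (p : List Bool) : List Bool → Bw
  | [] => 0
  | a :: t =>
      (if p.isPrefixOf (a :: t) then Finsupp.single (true :: (a :: t).drop p.length) 1 else 0) +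
      Finsupp.mapDomain (a :: ·) (replaceOcc p t)

/-- The map `δ` on words in the letters `x, y`. -/
def deltaB (l : List Bool) : Bw :=
  (if l.take 2 = [true, false] then (1/2 : ℚ) • Finsupp.single (l.drop 2) 1 else 0) -
  (if l.take 2 = [false, true] then (1/2 : ℚ) • Finsupp.single (l.drop 2) 1 else 0) +
  (if l.take 2 = [true, true] then (1/4 : ℚ) • Finsupp.single (l.drop 2) 1 else 0) +
  (1/2 : ℚ) • (replaceOcc [true, true, false] l - replaceOcc [false, true, true] l)

/-- The map `δ : 𝔥¹ → 𝔥¹`. -/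
def deltaH (w : H) : H := w.sum fun a c => c • Finsupp.mapDomain fromXY (deltaB (toXY a))

/-- The recursively defined map `𝔇` on tuples, with an explicit fuel parameter.
(The fuel `c.sum + 1` is always sufficient, since the total sum of the entries strictly
decreases in each recursive call.) -/
def Dfuel : ℕ → List ℕ → Bw
  | _, [] => Finsupp.single [] 1
  | 0, _ :: _ => 0
  | fuel + 1, k :: t =>
      let c := k :: t
      let n := c.length
      let ones : Finset ℕ := (Finset.Icc 1 n).filter fun i => c.getD (i - 1) 0 = 1
      let bigs : Finset ℕ := (Finset.Icc 1 n).filter fun i => 1 < c.getD (i - 1) 0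
      let evenOdd : Finset ℕ → Prop := fun A =>
        ∀ i ∈ A, (Even i → i + 1 ∈ A) ∧ (Odd i → i - 1 ∈ A)
      let oddEven : Finset ℕ → Prop := fun A =>
        ∀ i ∈ A, (Odd i → i + 1 ∈ A) ∧ (Even i → i - 1 ∈ A)
      let noEvenPair : Finset ℕ → Prop := fun B' =>
        ∀ l : ℕ, 1 ≤ l → ¬(2 * l ∈ B' ∧ 2 * l + 1 ∈ B')
      let noOddPair : Finset ℕ → Prop := fun B' =>
        ∀ l : ℕ, 1 ≤ l → ¬(2 * l - 1 ∈ B' ∧ 2 * l ∈ B')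
      let newc : Finset ℕ → Finset ℕ → List ℕ := fun A B' =>
        (List.range n).filterMap fun j =>
          if j + 1 ∈ A then none
          else some (c.getD j 0 - if j + 1 ∈ B' then 1 else 0)
      (∑ A ∈ ones.powerset.filter evenOdd,
        ∑ B' ∈ bigs.powerset.filter (fun B' => 1 ≤ A.card + B'.card ∧ noEvenPair B'),
          ((-1 : ℚ) ^ (B'.card + 1)) •
            Finsupp.mapDomain (fun w => List.replicate (A.card + B'.card) false ++ w)
              (Dfuel fuel (newc A B'))) +
      (∑ A ∈ ones.powerset.filter evenOdd,
        ∑ B' ∈ bigs.powerset.filter (fun B' => 2 ≤ A.card + B'.card ∧ noEvenPair B'),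
          ((-1 : ℚ) ^ (B'.card + 1)) •
            Finsupp.mapDomain
              (fun w => List.replicate (A.card + B'.card - 1) false ++ true :: w)
              (Dfuel fuel (newc A B'))) +
      (∑ A ∈ ones.powerset.filter oddEven,
        ∑ B' ∈ bigs.powerset.filter (fun B' => 2 ≤ A.card + B'.card ∧ noOddPair B'),
          ((-1 : ℚ) ^ B'.card) •
            Finsupp.mapDomain
              (fun w => List.replicate (A.card + B'.card - 1) false ++ true :: w)
              (Dfuel fuel (newc A B')))

/-- The map `𝔇` on tuples of positive integers. -/
def DropD (c : List ℕ) : Bw := Dfuel (c.sum + 1) c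

/-- Run-length encoding of a word in `x, y`: the exponents `(c₁, …, c_{2s})` of
`x^{c₁} y^{c₂} ⋯ x^{c_{2s-1}} y^{c_{2s}}`. -/
def rle : List Bool → List ℕ
  | [] => []
  | a :: t => ((t.takeWhile (· = a)).length + 1) :: rle (t.dropWhile (· = a))
  termination_by l => l.length
  decreasing_by
    simp only [List.length_cons]
    exact Nat.lt_succ_of_le (List.Sublist.length_le (List.dropWhile_sublist _))

def Drop1W (a : List ℕ) : H := Finsupp.mapDomain fromXY (DropD (rle (toXY a)))

/-- The Drop1 operator `𝒟 : 𝔥⁰ → 𝔥^{≥2}` of Hirose–Maesaka–Seki–Watanabe. -/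
def Drop1 (w : H) : H := w.sum fun a c => c • Drop1W a

/-- The map `der = −𝒟 ∘ φ`, i.e. `der(w) = 𝒟(w ⧢ z₂ − w * z₂)`. -/
def der (w : H) : H := Drop1 (shmul w (zw [2]) - hmul w (zw [2]))

/-- The ideal `DR_*` of `(𝔥^{≥2}, *)` spanned by the `der^n(R(u,v)) * w`. -/
def DRstar : Submodule ℚ H :=
  Submodule.span ℚ {x | ∃ (n : ℕ) (u v w : H), isH2 u ∧ isH2 v ∧ isH2 w ∧
    x = hmul (der^[n] (Rop u v)) w}

/-- The lexicographic order `≻` on the lattice `ℤτ + ℤ`. -/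
def lexGT (a b : ℤ × ℤ) : Prop := b.1 < a.1 ∨ (a.1 = b.1 ∧ b.2 < a.2)

/-- The lattice point `mτ + n`. -/
def lat (τ : ℂ) (p : ℤ × ℤ) : ℂ := p.1 * τ + p.2

/-- The finite partial sum `S_{M,N}(k₁,…,k_r; τ)` of the multiple Eisenstein series. -/
def SMN (k : List ℕ) (M N : ℕ) (τ : ℂ) : ℂ :=
  ∑ f ∈ (Fintype.piFinset fun _ : Fin k.length =>
      (Finset.Ioo (-(M : ℤ)) (M : ℤ)) ×ˢ (Finset.Ioo (-(N : ℤ)) (N : ℤ))).filter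
      (fun f => ∀ i : Fin k.length,
        lexGT (f i) (if h : (i : ℕ) + 1 < k.length then f ⟨(i : ℕ) + 1, h⟩ else (0, 0))),
    ∏ i : Fin k.length, (lat τ (f i)) ^ (-(k.get i : ℤ))

/-- The finite partial sums of the `g`-part: only lattice points with positive
imaginary part. -/
def gSMN (k : List ℕ) (M N : ℕ) (τ : ℂ) : ℂ :=
  ∑ f ∈ (Fintype.piFinset fun _ : Fin k.length =>
      (Finset.Ioo (-(M : ℤ)) (M : ℤ)) ×ˢ (Finset.Ioo (-(N : ℤ)) (N : ℤ))).filter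
      (fun f => (∀ i : Fin k.length,
        lexGT (f i) (if h : (i : ℕ) + 1 < k.length then f ⟨(i : ℕ) + 1, h⟩ else (0, 0))) ∧
        ∀ i : Fin k.length, 0 < (lat τ (f i)).im),
    ∏ i : Fin k.length, (lat τ (f i)) ^ (-(k.get i : ℤ))

/-- The multiple zeta value `ζ(k₁,…,k_r)` as an (unconditional) sum. -/
def zetaValue (k : List ℕ) : ℂ :=
  ∑' n : Fin k.length → ℕ,
    if ∀ i : Fin k.length,
        (if h : (i : ℕ) + 1 < k.length then n ⟨(i : ℕ) + 1, h⟩ else 0) < n i then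
      ∏ i : Fin k.length, (n i : ℂ) ^ (-(k.get i : ℤ))
    else 0

section Quasi

variable {R : Type*} [CommRing R] [Algebra ℚ R]

/-- `F_w(M) = Σ_{w = w₁⋯w_s} Σ_{M > m₁ > ⋯ > m_s > 0} f_{w₁}(m₁)⋯f_{w_s}(m_s)` on words. -/
def Fword (f : ℕ → H →ₗ[ℚ] R) (M : ℕ) (l : List ℕ) : R :=
  if l = [] then 1
  else ∑ c : Composition l.length,
    ∑ m ∈ (Fintype.piFinset fun _ : Fin c.length => Finset.Ioo 0 M).filter
        (fun m => StrictAnti m),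
      ∏ i : Fin c.length, f (m i) (zw ((l.splitWrtComposition c).getD (i : ℕ) []))

/-- The ℚ-linear extension of `Fword`. -/
def FL (f : ℕ → H →ₗ[ℚ] R) (M : ℕ) (w : H) : R := w.sum fun l c => c • Fword f M l

/-- `μ^{m₁,…,m_r} = 1/(r₁!⋯r_s!)` where `r₁,…,r_s` are the multiplicities of the
distinct values of `m`. -/
def muCoeff {s : ℕ} (m : Fin s → ℕ) : ℚ :=
  (∏ v ∈ Finset.image m Finset.univ,
    ((Finset.univ.filter fun i => m i = v).card.factorial : ℚ))⁻¹

/-- `coF(M)` on words: supported on powers of `z₁`. -/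
def coFword (a : ℕ → R) (M : ℕ) (l : List ℕ) : R :=
  if ∀ k ∈ l, k = 1 then
    (-1 : R) ^ l.length *
      ∑ m ∈ (Fintype.piFinset fun _ : Fin l.length => Finset.Ioo 0 M).filter
          (fun m => Antitone m),
        muCoeff m • ∏ i : Fin l.length, a (m i)
  else 0

/-- The ℚ-linear extension of `coFword`. -/
def coFL (a : ℕ → R) (M : ℕ) (w : H) : R := w.sum fun l c => c • coFword a M l

/-- `F^*(M)`: the deconcatenation convolution of `coF(M)` and `F(M)` on words. -/
def FstarWord (f : ℕ → H →ₗ[ℚ] R) (M : ℕ) (l : List ℕ) : R :=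
  ∑ i ∈ Finset.range (l.length + 1),
    coFword (fun m => f m (zw [1])) M (l.take i) * Fword f M (l.drop i)

/-- The ℚ-linear extension of `FstarWord`. -/
def FstarL (f : ℕ → H →ₗ[ℚ] R) (M : ℕ) (w : H) : R := w.sum fun l c => c • FstarWord f M l

end Quasi

/-- Parse a word `b_{k₁}b₀^{m₁} ⋯ b_{k_r}b₀^{m_r}` (a list over ℕ, with `0` playing the
role of `b₀`) into the list of pairs `(k₁,m₁), …, (k_r,m_r)`. -/
def toPairs : List ℕ → List (ℕ × ℕ)
  | [] => []
  | k :: t => (k, (t.takeWhile (· = 0)).length) :: toPairs (t.dropWhile (· = 0))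
  termination_by l => l.length
  decreasing_by
    simp only [List.length_cons]
    exact Nat.lt_succ_of_le (List.Sublist.length_le (List.dropWhile_sublist _))

def ofPairs (P : List (ℕ × ℕ)) : List ℕ :=
  (P.map fun p => p.1 :: List.replicate p.2 0).flatten

/-- The involution `τ_b` on words of `ℚ⟨ℬ⟩⁰`. -/
def taubW (l : List ℕ) : List ℕ :=
  ofPairs (((toPairs l).map fun p => (p.2 + 1, p.1 - 1)).reverse)

/-- The ℚ-linear involution `τ_b` on `ℚ⟨ℬ⟩⁰`. -/
def taub (w : H) : H := w.sum fun a c => c • (Finsupp.single (taubW a) 1 : H)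

/-- The balanced harmonic product `*_b` on words of `ℚ⟨ℬ⟩⁰`. -/
def hbW : List ℕ → List ℕ → H
  | [], v => Finsupp.single v 1
  | i :: u, [] => Finsupp.single (i :: u) 1
  | i :: u, j :: v =>
      Finsupp.mapDomain (i :: ·) (hbW u (j :: v)) +
      Finsupp.mapDomain (j :: ·) (hbW (i :: u) v) +
      (if i ≠ 0 ∧ j ≠ 0 then Finsupp.mapDomain ((i + j) :: ·) (hbW u v) else 0)
  termination_by u v => u.length + v.length

/-- The balanced harmonic product `*_b`. -/
def hb (u v : H) : H := u.sum fun a ca => v.sum fun b cb => (ca * cb) • hbW a b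

/-- The derivation `D` of `ℚ⟨ℬ⟩⁰`:
`D(b_{k₁}b₀^{m₁}⋯b_{k_r}b₀^{m_r}) = Σ_{1≤i≤j≤r} k_i(m_j+1)·(word with k_i, m_j increased)`. -/
def Dbal (w : H) : H :=
  w.sum fun a c =>
    let P := toPairs a
    ∑ i ∈ Finset.range P.length, ∑ j ∈ Finset.Ico i P.length,
      (c * (P.getD i (0, 0)).1 * ((P.getD j (0, 0)).2 + 1)) •
        (Finsupp.single (ofPairs (P.mapIdx fun t p =>
          ((if t = i then p.1 + 1 else p.1), (if t = j then p.2 + 1 else p.2)))) 1 : H)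



/-! ### Sums over the admissible pairs (A, B), two positions at a time -/

variable {M : Type*} [AddCommMonoid M]

/-- `A` is a union of pairs `{j, j + 1}` with `j ≡ i` mod 2. For subsets of the positions `1, …,
2s`, `i = 2` is the even–odd condition and `i = 1` the odd–even one. -/
def pairA (i : ℕ) (A : Finset ℕ) : Prop :=
  ∀ j ∈ A, (Even (j + i) → j + 1 ∈ A) ∧ (¬ Even (j + i) → j - 1 ∈ A)

/-- `B` contains no pair `{j, j + 1}` with `j ≡ i` mod 2. -/
def pairB (i : ℕ) (B : Finset ℕ) : Prop :=
  ∀ j, Even (j + i) → ¬(j ∈ B ∧ j + 1 ∈ B)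

/-- The positions of the entries equal to `1`, the first entry having position `i`. -/
def onesF : ℕ → List ℕ → Finset ℕ
  | _, [] => ∅
  | i, k :: t => if k = 1 then insert i (onesF (i + 1) t) else onesF (i + 1) t

/-- The positions of the entries greater than `1`, the first entry having position `i`. -/
def bigsF : ℕ → List ℕ → Finset ℕ
  | _, [] => ∅
  | i, k :: t => if 1 < k then insert i (bigsF (i + 1) t) else bigsF (i + 1) t

/-- The tuple `𝐜_{(−A)} − δ_B`, the first entry of `𝐜` having position `i`. -/
def nc : ℕ → List ℕ → Finset ℕ → Finset ℕ → List ℕ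
  | _, [], _, _ => []
  | i, k :: t, A, B =>
      if i ∈ A then nc (i + 1) t A B else (k - if i ∈ B then 1 else 0) :: nc (i + 1) t A B

/-- The sum of `F (#A) (#B) (𝐜_{(−A)} − δ_B)` over all odd–even sets `A` of positions of ones and
all sets `B` of positions of entries `> 1` that contain no pair `{2l − 1, 2l}`. The positions are
grouped as `{1, 2}, {3, 4}, …`: a pair is either left alone, or has exactly one entry decreased, or,
if both its entries are `1`, is deleted. A last unpaired position is left alone or decreased. -/
def PRs : List ℕ → (ℕ → ℕ → List ℕ → M) → M
  | [], F => F 0 0 []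
  | [b], F => F 0 0 [b] + if 1 < b then F 0 1 [b - 1] else 0
  | a :: b :: t, F => PRs t fun m n l =>
      F m n (a :: b :: l) + (if 1 < a then F m (n + 1) ((a - 1) :: b :: l) else 0) +
      (if 1 < b then F m (n + 1) (a :: (b - 1) :: l) else 0) +
      (if a = 1 ∧ b = 1 then F (m + 2) n l else 0)

/-- The analogue of `PRs` for even–odd sets `A` and sets `B` containing no pair `{2l, 2l + 1}`: the
first position stands alone, and is never in `A`, while the others are grouped as
`{2, 3}, {4, 5}, …`. -/
def EOs : List ℕ → (ℕ → ℕ → List ℕ → M) → M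
  | [], F => F 0 0 []
  | a :: r, F => PRs r fun m n l =>
      F m n (a :: l) + (if 1 < a then F m (n + 1) ((a - 1) :: l) else 0)

theorem mem_onesF (c : List ℕ) : ∀ i j, j ∈ onesF i c ↔ i ≤ j ∧ c.getD (j - i) 0 = 1 := by
  induction c with
  | nil => intro i j; simp [onesF]
  | cons k t ih =>
    intro i j
    rcases Nat.lt_trichotomy j i with h | h | h
    · have h1 : ¬ i ≤ j := by omega
      have h2 : ¬ i + 1 ≤ j := by omega
      have h3 : j ≠ i := by omega
      by_cases hk : k = 1 <;> simp [onesF, hk, ih, h1, h2, h3]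
    · subst h
      by_cases hk : k = 1 <;> simp [onesF, hk, ih]
    · obtain ⟨d, rfl⟩ : ∃ d, j = i + 1 + d := ⟨j - (i + 1), by omega⟩
      have h1 : i + 1 + d - i = d + 1 := by omega
      have h2 : i + 1 + d - (i + 1) = d := by omega
      have h3 : i + 1 + d ≠ i := by omega
      have h4 : i ≤ i + 1 + d := by omega
      by_cases hk : k = 1 <;> simp [onesF, hk, ih, h1, h2, h3, h4]

theorem mem_bigsF (c : List ℕ) : ∀ i j, j ∈ bigsF i c ↔ i ≤ j ∧ 1 < c.getD (j - i) 0 := by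
  induction c with
  | nil => intro i j; simp [bigsF]
  | cons k t ih =>
    intro i j
    rcases Nat.lt_trichotomy j i with h | h | h
    · have h1 : ¬ i ≤ j := by omega
      have h2 : ¬ i + 1 ≤ j := by omega
      have h3 : j ≠ i := by omega
      by_cases hk : 1 < k <;> simp [bigsF, hk, ih, h1, h2, h3]
    · subst h
      by_cases hk : 1 < k <;> simp [bigsF, hk, ih]
    · obtain ⟨d, rfl⟩ : ∃ d, j = i + 1 + d := ⟨j - (i + 1), by omega⟩
      have h1 : i + 1 + d - i = d + 1 := by omega
      have h2 : i + 1 + d - (i + 1) = d := by omega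
      have h3 : i + 1 + d ≠ i := by omega
      have h4 : i ≤ i + 1 + d := by omega
      by_cases hk : 1 < k <;> simp [bigsF, hk, ih, h1, h2, h3, h4]

theorem onesF_lb {c : List ℕ} {i : ℕ} {A : Finset ℕ} (hA : A ∈ (onesF i c).powerset) :
    ∀ j < i, j ∉ A := fun j hj h => by
  have := ((mem_onesF c i j).1 (Finset.mem_powerset.1 hA h)).1
  omega

theorem bigsF_lb {c : List ℕ} {i : ℕ} {A : Finset ℕ} (hA : A ∈ (bigsF i c).powerset) :
    ∀ j < i, j ∉ A := fun j hj h => by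
  have := ((mem_bigsF c i j).1 (Finset.mem_powerset.1 hA h)).1
  omega

theorem sum_onesF_cons (i k : ℕ) (t : List ℕ) (G : Finset ℕ → M) :
    ∑ A ∈ (onesF i (k :: t)).powerset, G A =
      ∑ A ∈ (onesF (i + 1) t).powerset, (G A + if k = 1 then G (insert i A) else 0) := by
  by_cases hk : k = 1
  · have : i ∉ onesF (i + 1) t := by simp [mem_onesF]
    simp [onesF, hk, Finset.sum_powerset_insert this, Finset.sum_add_distrib]
  · simp [onesF, hk]

theorem sum_bigsF_cons (i k : ℕ) (t : List ℕ) (G : Finset ℕ → M) :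
    ∑ A ∈ (bigsF i (k :: t)).powerset, G A =
      ∑ A ∈ (bigsF (i + 1) t).powerset, (G A + if 1 < k then G (insert i A) else 0) := by
  by_cases hk : 1 < k
  · have : i ∉ bigsF (i + 1) t := by simp [mem_bigsF]
    simp [bigsF, hk, Finset.sum_powerset_insert this, Finset.sum_add_distrib]
  · simp [bigsF, hk]

/-- Splitting off the first position, which lies in neither `A` nor `B`, in `A` (entry `1`), or in
`B` (entry `> 1`). -/
theorem sum_cons (i k : ℕ) (t : List ℕ) (G : Finset ℕ → Finset ℕ → M) :
    ∑ A ∈ (onesF i (k :: t)).powerset, ∑ B ∈ (bigsF i (k :: t)).powerset, G A B =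
      ∑ A ∈ (onesF (i + 1) t).powerset, ∑ B ∈ (bigsF (i + 1) t).powerset,
        (G A B + (if k = 1 then G (insert i A) B else 0) +
          if 1 < k then G A (insert i B) else 0) := by
  rw [sum_onesF_cons]
  refine Finset.sum_congr rfl fun A _ => ?_
  rcases lt_trichotomy k 1 with hk | rfl | hk
  · have h1 : ¬ 1 < k := by omega
    have h2 : k ≠ 1 := by omega
    rw [sum_bigsF_cons]; simp [h1, h2]
  · rw [sum_bigsF_cons, sum_bigsF_cons]; simp [Finset.sum_add_distrib]
  · have h2 : k ≠ 1 := by omega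
    rw [sum_bigsF_cons]; simp [hk, h2]

theorem nc_congr (t : List ℕ) : ∀ (i : ℕ) (A B A' B' : Finset ℕ),
    (∀ j, i ≤ j → (j ∈ A ↔ j ∈ A')) → (∀ j, i ≤ j → (j ∈ B ↔ j ∈ B')) →
    nc i t A B = nc i t A' B' := by
  induction t with
  | nil => intros; rfl
  | cons k t ih =>
    intro i A B A' B' hA hB
    have := ih (i + 1) A B A' B' (fun j hj => hA j (by omega)) (fun j hj => hB j (by omega))
    simp only [nc, hA i le_rfl, hB i le_rfl, this]

theorem pairA_two (i : ℕ) (A : Finset ℕ) : pairA (i + 2) A ↔ pairA i A := by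
  simp only [pairA, ← add_assoc, Nat.even_add_one, not_not]

theorem pairB_two (i : ℕ) (A : Finset ℕ) : pairB (i + 2) A ↔ pairB i A := by
  simp only [pairB, ← add_assoc, Nat.even_add_one, not_not]

theorem pairA_insert_left {i : ℕ} {A : Finset ℕ} (h : i + 1 ∉ A) : ¬ pairA i (insert i A) := by
  intro H
  have := (H i (by simp)).1 (by simp)
  simp [h] at this

theorem pairA_insert_right {i : ℕ} {A : Finset ℕ} (h : i ∉ A) :
    ¬ pairA i (insert (i + 1) A) := by
  intro H
  have := (H (i + 1) (by simp)).2 (by rw [Nat.not_even_iff_odd]; exact ⟨i, by ring⟩)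
  simp [h] at this

theorem pairA_insert_both {i : ℕ} {A : Finset ℕ} (h : ∀ j < i + 2, j ∉ A) :
    pairA i (insert i (insert (i + 1) A)) ↔ pairA i A := by
  constructor
  · intro H j hj
    have h2 : i + 2 ≤ j := by by_contra hc; exact h j (by omega) hj
    have := H j (by simp [hj])
    refine ⟨fun he => ?_, fun he => ?_⟩
    · have := this.1 he
      simp only [Finset.mem_insert] at this
      rcases this with h | h | h
      · omega
      · omega
      · exact h
    · have := this.2 he
      simp only [Finset.mem_insert] at this
      rcases this with h | h | h
      · omega
      · obtain rfl : j = i + 2 := by omega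
        exact absurd ⟨i + 1, by ring⟩ he
      · exact h
  · intro H j hj
    simp only [Finset.mem_insert] at hj ⊢
    rcases hj with rfl | rfl | hj
    · simp
    · refine ⟨fun he => ?_, by simp⟩
      rw [show i + 1 + i = 2 * i + 1 by ring] at he
      simp at he
    · exact ⟨fun he => Or.inr (Or.inr ((H j hj).1 he)), fun he => Or.inr (Or.inr ((H j hj).2 he))⟩

theorem pairB_insert_left {i : ℕ} {A : Finset ℕ} (h : ∀ j < i + 2, j ∉ A) :
    pairB i (insert i A) ↔ pairB i A := by
  refine forall₂_congr fun j he => not_congr ?_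
  simp only [Finset.mem_insert]
  constructor
  · rintro ⟨rfl | h1, h2 | h2⟩
    · omega
    · exact absurd h2 (h _ (by omega))
    · exact absurd h1 (h _ (by omega))
    · exact ⟨h1, h2⟩
  · exact fun ⟨h1, h2⟩ => ⟨Or.inr h1, Or.inr h2⟩

theorem pairB_insert_right {i : ℕ} {A : Finset ℕ} (h : ∀ j < i + 2, j ∉ A) :
    pairB i (insert (i + 1) A) ↔ pairB i A := by
  refine forall₂_congr fun j he => not_congr ?_
  simp only [Finset.mem_insert]
  constructor
  · rintro ⟨rfl | h1, h2 | h2⟩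
    · omega
    · rw [show i + 1 + i = 2 * i + 1 by ring] at he
      simp at he
    · exact absurd h1 (h _ (by omega))
    · exact ⟨h1, h2⟩
  · exact fun ⟨h1, h2⟩ => ⟨Or.inr h1, Or.inr h2⟩

theorem pairB_insert_both {i : ℕ} {A : Finset ℕ} : ¬ pairB i (insert i (insert (i + 1) A)) :=
  fun H => H i (by simp) (by simp)

/-- The sum over the subsets `A` and `B` factors over consecutive pairs of positions: in each pair,
of the choices for `A` and `B` only four are admissible. -/
theorem sum_pair : ∀ (c : List ℕ) (i : ℕ) (F : ℕ → ℕ → List ℕ → M),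
    ∑ A ∈ (onesF i c).powerset, ∑ B ∈ (bigsF i c).powerset,
      (if pairA i A ∧ pairB i B then F A.card B.card (nc i c A B) else 0) = PRs c F
  | [], i, F => by
    have h1 : pairA i ∅ := by simp [pairA]
    have h2 : pairB i ∅ := by simp [pairB]
    simp [onesF, bigsF, nc, PRs, h1, h2]
  | [b], i, F => by
    have h1 : pairA i ∅ := by simp [pairA]
    have h2 : pairB i ∅ := by simp [pairB]
    have h3 : pairB i {i} := by
      intro j _; simp only [Finset.mem_singleton]; omega
    have h4 : ¬ pairA i {i} := by simp [pairA]
    rw [sum_cons]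
    simp [onesF, bigsF, nc, PRs, h1, h2, h3, h4]
  | a :: b :: t, i, F => by
    rw [sum_cons, sum_cons, PRs, ← sum_pair t (i + 1 + 1)]
    refine Finset.sum_congr rfl fun A hA => Finset.sum_congr rfl fun B hB => ?_
    have hA' := onesF_lb hA
    have hB' := bigsF_lb hB
    have a0 := hA' i (by omega)
    have a1 := hA' (i + 1) (by omega)
    have b0 := hB' i (by omega)
    have b1 := hB' (i + 1) (by omega)
    have i01 : i ≠ i + 1 := by omega
    have nn : ∀ A' B', (∀ j, i + 1 + 1 ≤ j → (j ∈ A' ↔ j ∈ A)) →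
      (∀ j, i + 1 + 1 ≤ j → (j ∈ B' ↔ j ∈ B)) → nc (i + 1 + 1) t A' B' = nc (i + 1 + 1) t A B :=
      fun A' B' h1 h2 => nc_congr t _ _ _ _ _ h1 h2
    have e0 : ∀ (C : Finset ℕ) j, i + 1 + 1 ≤ j → (j ∈ insert i C ↔ j ∈ C) := by
      intro C j hj; simp [show j ≠ i by omega]
    have e1 : ∀ (C : Finset ℕ) j, i + 1 + 1 ≤ j → (j ∈ insert (i + 1) C ↔ j ∈ C) := by
      intro C j hj; simp [show j ≠ i + 1 by omega]
    have e2 : ∀ (C : Finset ℕ) j, i + 1 + 1 ≤ j →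
        (j ∈ insert i (insert (i + 1) C) ↔ j ∈ C) := by
      intro C j hj; simp [show j ≠ i + 1 by omega, show j ≠ i by omega]
    have p1 := pairA_insert_left a1
    have p2 := pairA_insert_right a0
    have p3 := pairA_insert_both hA'
    have q1 := pairB_insert_left hB'
    have q2 := pairB_insert_right hB'
    have q3 := @pairB_insert_both i B
    have ra := pairA_two i A
    have rb := pairB_two i B
    rw [add_assoc i 1 1] at *
    have c1 : (insert i B).card = B.card + 1 := Finset.card_insert_of_notMem b0
    have c2 : (insert (i + 1) B).card = B.card + 1 := Finset.card_insert_of_notMem b1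
    have c3 : (insert i (insert (i + 1) A)).card = A.card + 2 := by
      rw [Finset.card_insert_of_notMem, Finset.card_insert_of_notMem a1]
      simp [a0]
    have n1 := nn A (insert i B) (fun _ _ => Iff.rfl) (e0 B)
    have n2 := nn A (insert (i + 1) B) (fun _ _ => Iff.rfl) (e1 B)
    have n3 := nn (insert i (insert (i + 1) A)) B (e2 A) (fun _ _ => Iff.rfl)
    simp only [p1, p2, p3, q1, q2, q3, ra, rb, false_and, and_false, if_false, nc,
      Finset.mem_insert, a0, a1, b0, b1, i01, i01.symm, or_false, or_true,
      if_true, ite_self, add_zero, zero_add, c1, c2, c3, add_assoc i 1 1, n1, n2, n3, Nat.sub_zero]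
    by_cases hP : pairA i A ∧ pairB i B
    · simp only [if_pos hP]
      rw [add_right_comm _ _ (ite (1 < b) _ _)]
      congr 1
      by_cases ha : a = 1 <;> by_cases hb : b = 1 <;> simp [ha, hb]
    · simp only [if_neg hP, ite_self, add_zero]

/-! ### The recursion for 𝔇 in terms of pairs of positions -/

/-- Position `1` is odd and `0 ∉ A`, so an even–odd set `A` does not contain it; the remaining
positions pair up as in `sum_pair`. -/
theorem sum_EOs (k : ℕ) (t : List ℕ) (F : ℕ → ℕ → List ℕ → M) :
    ∑ A ∈ (onesF 1 (k :: t)).powerset, ∑ B ∈ (bigsF 1 (k :: t)).powerset,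
      (if pairA 2 A ∧ pairB 2 B then F A.card B.card (nc 1 (k :: t) A B) else 0) =
      EOs (k :: t) F := by
  rw [sum_cons, EOs, ← sum_pair t (1 + 1)]
  refine Finset.sum_congr rfl fun A hA => Finset.sum_congr rfl fun B hB => ?_
  have hA' := onesF_lb hA
  have hB' := bigsF_lb hB
  have a0 := hA' 0 (by omega)
  have a1 := hA' 1 (by omega)
  have b0 := hB' 0 (by omega)
  have b1 := hB' 1 (by omega)
  have p1 : ¬ pairA 2 (insert 1 A) := by
    intro H
    have := (H 1 (by simp)).2 (by decide)
    simp [a0] at this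
  have q1 : pairB 2 (insert 1 B) ↔ pairB 2 B := by
    refine forall₂_congr fun j he => not_congr ?_
    have hj : j ≠ 1 := by rintro rfl; revert he; decide
    by_cases h0 : j = 0
    · subst h0; simp [b0]
    · simp [hj, h0]
  have c1 : (insert 1 B).card = B.card + 1 := Finset.card_insert_of_notMem b1
  have n1 : nc (1 + 1) t A (insert 1 B) = nc (1 + 1) t A B :=
    nc_congr t _ _ _ _ _ (fun _ _ => Iff.rfl) (fun j hj => by simp [show j ≠ 1 by omega])
  simp only [p1, q1, c1, nc, a1, b1, n1, Finset.mem_insert, true_or, if_true, if_false, false_and,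
    ite_self, add_zero, Nat.sub_zero]
  by_cases hP : pairA 2 A ∧ pairB 2 B
  · simp only [if_pos hP, Nat.reduceAdd]
  · simp only [if_neg hP, ite_self, add_zero, Nat.reduceAdd]

/-- The tuple `𝐜_{(−A)} − δ_B` as it occurs in the definition of `Dfuel`, computed recursively. -/
theorem newc_eq (c : List ℕ) : ∀ (i : ℕ) (A B : Finset ℕ),
    ((List.range c.length).filterMap fun j =>
      if j + i ∈ A then none else some (c.getD j 0 - if j + i ∈ B then 1 else 0)) = nc i c A B := by
  induction c with
  | nil => intros; rfl
  | cons k t ih =>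
    intro i A B
    have := ih (i + 1) A B
    rw [List.length_cons, List.range_succ_eq_map, List.filterMap_cons, List.filterMap_map, nc,
      ← this]
    have e : ((fun j => if j + i ∈ A then none
        else some ((k :: t).getD j 0 - if j + i ∈ B then 1 else 0)) ∘ Nat.succ) =
        fun j => if j + (i + 1) ∈ A then none
          else some (t.getD j 0 - if j + (i + 1) ∈ B then 1 else 0) := by
      funext j
      simp only [Function.comp, Nat.succ_eq_add_one, List.getD_cons_succ]
      rw [show j + 1 + i = j + (i + 1) by ring]
    rw [e]
    by_cases h : i ∈ A <;> simp [h]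

theorem onesF_eq (c : List ℕ) :
    ((Finset.Icc 1 c.length).filter fun i => c.getD (i - 1) 0 = 1) = onesF 1 c := by
  ext j
  rw [mem_onesF, Finset.mem_filter, Finset.mem_Icc]
  constructor
  · rintro ⟨⟨h1, h2⟩, h3⟩; exact ⟨h1, h3⟩
  · rintro ⟨h1, h3⟩
    refine ⟨⟨h1, ?_⟩, h3⟩
    by_contra hc
    rw [List.getD_eq_default _ _ (by omega)] at h3
    omega

theorem bigsF_eq (c : List ℕ) :
    ((Finset.Icc 1 c.length).filter fun i => 1 < c.getD (i - 1) 0) = bigsF 1 c := by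
  ext j
  rw [mem_bigsF, Finset.mem_filter, Finset.mem_Icc]
  constructor
  · rintro ⟨⟨h1, h2⟩, h3⟩; exact ⟨h1, h3⟩
  · rintro ⟨h1, h3⟩
    refine ⟨⟨h1, ?_⟩, h3⟩
    by_contra hc
    rw [List.getD_eq_default _ _ (by omega)] at h3
    omega

theorem evenOdd_iff {A : Finset ℕ} :
    (∀ i ∈ A, (Even i → i + 1 ∈ A) ∧ (Odd i → i - 1 ∈ A)) ↔ pairA 2 A := by
  refine forall₂_congr fun j _ => ?_
  rw [← Nat.not_even_iff_odd, show (Even (j + 2) ↔ Even j) by simp [Nat.even_add]]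

theorem oddEven_iff {A : Finset ℕ} :
    (∀ i ∈ A, (Odd i → i + 1 ∈ A) ∧ (Even i → i - 1 ∈ A)) ↔ pairA 1 A := by
  refine forall₂_congr fun j _ => ?_
  rw [← Nat.not_even_iff_odd, Nat.even_add_one, not_not]

theorem noEvenPair_iff {B : Finset ℕ} (h : 0 ∉ B) :
    (∀ l : ℕ, 1 ≤ l → ¬(2 * l ∈ B ∧ 2 * l + 1 ∈ B)) ↔ pairB 2 B := by
  constructor
  · intro H j hj
    obtain ⟨l, rfl⟩ : Even j := by simpa [Nat.even_add] using hj
    rw [← two_mul]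
    rcases Nat.eq_zero_or_pos l with rfl | hl
    · simp [h]
    · exact H l hl
  · exact fun H l _ => H _ (by simp [Nat.even_add])

theorem noOddPair_iff {B : Finset ℕ} :
    (∀ l : ℕ, 1 ≤ l → ¬(2 * l - 1 ∈ B ∧ 2 * l ∈ B)) ↔ pairB 1 B := by
  constructor
  · intro H j hj
    obtain ⟨l, hl⟩ := hj
    have := H l (by omega)
    rwa [show 2 * l - 1 = j by omega, show 2 * l = j + 1 by omega] at this
  · intro H l hl
    have := H (2 * l - 1) ⟨l, by omega⟩
    rwa [show 2 * l - 1 + 1 = 2 * l by omega] at this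

/-- The prefixing operator. -/
def pre (p : List Bool) : Bw →ₗ[ℚ] Bw := Finsupp.lmapDomain ℚ ℚ (p ++ ·)

/-- The word `x^m`. -/
def sx (m : ℕ) : List Bool := List.replicate m false

/-- The word `x^{m−1} y`, for `m ≥ 1`. -/
def sxy (m : ℕ) : List Bool := List.replicate (m - 1) false ++ [true]

/-- The summand of the first sum defining `𝔇`, for `m = #A`, `n = #B` and `l = 𝐜_{(−A)} − δ_B`, with
`D` in place of `𝔇`. The exponent `n + 1` replaces `n − 1`, which would truncate at `n = 0`. -/
def T1 (D : List ℕ → Bw) (m n : ℕ) (l : List ℕ) : Bw :=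
  if 1 ≤ m + n then (-1 : ℚ) ^ (n + 1) • pre (sx (m + n)) (D l) else 0

/-- The summand of the second sum defining `𝔇`. -/
def T2 (D : List ℕ → Bw) (m n : ℕ) (l : List ℕ) : Bw :=
  if 2 ≤ m + n then (-1 : ℚ) ^ (n + 1) • pre (sxy (m + n)) (D l) else 0

/-- The summand of the third sum defining `𝔇`. -/
def T3 (D : List ℕ → Bw) (m n : ℕ) (l : List ℕ) : Bw :=
  if 2 ≤ m + n then (-1 : ℚ) ^ n • pre (sxy (m + n)) (D l) else 0

/-- The recursion for `𝔇` with its sums over subsets rewritten as sums over pairs of positions. -/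
theorem Dfuel_succ (f k : ℕ) (t : List ℕ) :
    Dfuel (f + 1) (k :: t) = EOs (k :: t) (T1 (Dfuel f)) + EOs (k :: t) (T2 (Dfuel f)) +
      PRs (k :: t) (T3 (Dfuel f)) := by
  rw [Dfuel, ← sum_EOs, ← sum_EOs, ← sum_pair _ 1]
  simp only [onesF_eq, bigsF_eq, Finset.sum_filter, newc_eq, evenOdd_iff, oddEven_iff]
  refine congrArg₂ (· + ·) (congrArg₂ (· + ·) ?_ ?_) ?_
  · refine Finset.sum_congr rfl fun A _ => ?_
    by_cases hP : pairA 2 A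
    · rw [if_pos hP]
      refine Finset.sum_congr rfl fun B hB => ?_
      rw [noEvenPair_iff (bigsF_lb hB 0 one_pos)]
      by_cases hQ : pairB 2 B
      · by_cases hR : 1 ≤ A.card + B.card
        · rw [if_pos ⟨hR, hQ⟩, if_pos ⟨hP, hQ⟩, T1, if_pos hR]
          rfl
        · rw [if_neg (fun h => hR h.1), if_pos ⟨hP, hQ⟩, T1, if_neg hR]
      · rw [if_neg (fun h => hQ h.2), if_neg (fun h => hQ h.2)]
    · simp [hP]
  · refine Finset.sum_congr rfl fun A _ => ?_
    by_cases hP : pairA 2 A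
    · rw [if_pos hP]
      refine Finset.sum_congr rfl fun B hB => ?_
      rw [noEvenPair_iff (bigsF_lb hB 0 one_pos)]
      by_cases hQ : pairB 2 B
      · by_cases hR : 2 ≤ A.card + B.card
        · rw [if_pos ⟨hR, hQ⟩, if_pos ⟨hP, hQ⟩, T2, if_pos hR]
          simp [pre, sxy]
        · rw [if_neg (fun h => hR h.1), if_pos ⟨hP, hQ⟩, T2, if_neg hR]
      · rw [if_neg (fun h => hQ h.2), if_neg (fun h => hQ h.2)]
    · simp [hP]
  · refine Finset.sum_congr rfl fun A _ => ?_
    by_cases hP : pairA 1 A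
    · rw [if_pos hP]
      refine Finset.sum_congr rfl fun B hB => ?_
      rw [noOddPair_iff]
      by_cases hQ : pairB 1 B
      · by_cases hR : 2 ≤ A.card + B.card
        · rw [if_pos ⟨hR, hQ⟩, if_pos ⟨hP, hQ⟩, T3, if_pos hR]
          simp [pre, sxy]
        · rw [if_neg (fun h => hR h.1), if_pos ⟨hP, hQ⟩, T3, if_neg hR]
      · rw [if_neg (fun h => hQ h.2), if_neg (fun h => hQ h.2)]
    · simp [hP]

/-! ### Independence of the fuel -/

/-- Each admissible choice `(A, B)` turns `c` into a tuple of positive integers whose sum has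
dropped by exactly `#A + #B`; only such arguments of `F` matter. -/
theorem PRs_congr : ∀ (c : List ℕ) (F F' : ℕ → ℕ → List ℕ → M), (∀ k ∈ c, 1 ≤ k) →
    (∀ m n l, l.sum + m + n = c.sum → (∀ k ∈ l, 1 ≤ k) → F m n l = F' m n l) →
    PRs c F = PRs c F'
  | [], F, F', _, h => h 0 0 [] (by simp) (by simp)
  | [b], F, F', hc, h => by
    have hb : 1 ≤ b := hc b (by simp)
    rw [PRs, PRs, h 0 0 [b] (by simp) (by simpa using hb)]
    by_cases hb' : 1 < b
    · rw [h 0 1 [b - 1] (by simp; omega) (by simp; omega)]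
    · simp [hb']
  | a :: b :: t, F, F', hc, h => by
    have ha : 1 ≤ a := hc a (by simp)
    have hb : 1 ≤ b := hc b (by simp)
    rw [PRs, PRs]
    refine PRs_congr t _ _ (fun k hk => hc k (by simp [hk])) fun m n l hs hp => ?_
    simp only [List.sum_cons, List.forall_mem_cons] at h
    have e1 := h m n (a :: b :: l) (by simp; omega) (by simp; exact ⟨ha, hb, hp⟩)
    rw [e1]
    congr 1
    · congr 1
      · congr 1
        by_cases ha' : 1 < a
        · rw [h m (n + 1) ((a - 1) :: b :: l) (by simp; omega) (by simp; exact ⟨by omega, hb, hp⟩)]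
        · simp [ha']
      · by_cases hb' : 1 < b
        · rw [h m (n + 1) (a :: (b - 1) :: l) (by simp; omega) (by simp; exact ⟨ha, by omega, hp⟩)]
        · simp [hb']
    · by_cases hab : a = 1 ∧ b = 1
      · rw [h (m + 2) n l (by omega) hp]
      · simp [hab]

theorem EOs_congr (a : ℕ) (r : List ℕ) (F F' : ℕ → ℕ → List ℕ → M) (hc : ∀ k ∈ a :: r, 1 ≤ k)
    (h : ∀ m n l, l.sum + m + n = (a :: r).sum → (∀ k ∈ l, 1 ≤ k) → F m n l = F' m n l) :
    EOs (a :: r) F = EOs (a :: r) F' := by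
  have ha : 1 ≤ a := hc a (by simp)
  rw [EOs, EOs]
  refine PRs_congr r _ _ (fun k hk => hc k (by simp [hk])) fun m n l hs hp => ?_
  rw [h m n (a :: l) (by simp; omega) (by simp; exact ⟨ha, hp⟩)]
  congr 1
  by_cases ha' : 1 < a
  · rw [h m (n + 1) ((a - 1) :: l) (by simp; omega) (by simp; exact ⟨by omega, hp⟩)]
  · simp [ha']

theorem T1_congr {D D' : List ℕ → Bw} {s m n : ℕ} {l : List ℕ} (hs : l.sum + m + n = s)
    (h : l.sum < s → D l = D' l) : T1 D m n l = T1 D' m n l := by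
  unfold T1; split_ifs <;> [rw [h (by omega)]; rfl]
theorem T2_congr {D D' : List ℕ → Bw} {s m n : ℕ} {l : List ℕ} (hs : l.sum + m + n = s)
    (h : l.sum < s → D l = D' l) : T2 D m n l = T2 D' m n l := by
  unfold T2; split_ifs <;> [rw [h (by omega)]; rfl]
theorem T3_congr {D D' : List ℕ → Bw} {s m n : ℕ} {l : List ℕ} (hs : l.sum + m + n = s)
    (h : l.sum < s → D l = D' l) : T3 D m n l = T3 D' m n l := by
  unfold T3; split_ifs <;> [rw [h (by omega)]; rfl]

/-- Every recursive call lowers the sum of the tuple, so any fuel at least that sum gives the same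
value. -/
theorem Dfuel_indep : ∀ (f f' : ℕ) (c : List ℕ), (∀ k ∈ c, 1 ≤ k) → c.sum ≤ f → c.sum ≤ f' →
    Dfuel f c = Dfuel f' c
  | f, f', [], _, _, _ => by simp [Dfuel]
  | 0, _, k :: t, hc, h, _ => by have := hc k (by simp); simp at h; omega
  | _ + 1, 0, k :: t, hc, _, h => by have := hc k (by simp); simp at h; omega
  | f + 1, f' + 1, k :: t, hc, h, h' => by
    have ih : ∀ l : List ℕ, (∀ k ∈ l, 1 ≤ k) → l.sum < (k :: t).sum → Dfuel f l = Dfuel f' l :=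
      fun l hl hs => Dfuel_indep f f' l hl (by omega) (by omega)
    rw [Dfuel_succ, Dfuel_succ]
    congr 1
    · congr 1
      · exact EOs_congr _ _ _ _ hc fun m n l hs hp => T1_congr hs (ih l hp)
      · exact EOs_congr _ _ _ _ hc fun m n l hs hp => T2_congr hs (ih l hp)
    · exact PRs_congr _ _ _ hc fun m n l hs hp => T3_congr hs (ih l hp)

theorem DropD_nil : DropD [] = Finsupp.single [] 1 := by simp [DropD, Dfuel]

/-- The defining recursion of `𝔇` on tuples of positive integers, without fuel. -/
theorem DropD_cons (k : ℕ) (t : List ℕ) (hc : ∀ j ∈ k :: t, 1 ≤ j) :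
    DropD (k :: t) = EOs (k :: t) (T1 DropD) + EOs (k :: t) (T2 DropD) +
      PRs (k :: t) (T3 DropD) := by
  have ih : ∀ l : List ℕ, (∀ k ∈ l, 1 ≤ k) → l.sum < (k :: t).sum →
      Dfuel (k :: t).sum l = DropD l :=
    fun l hl hs => Dfuel_indep _ _ l hl (by omega) (by omega)
  refine (Dfuel_succ (k :: t).sum k t).trans ?_
  refine congrArg₂ (· + ·) (congrArg₂ (· + ·) ?_ ?_) ?_
  · exact EOs_congr _ _ _ _ hc fun m n l hs hp => T1_congr hs (ih l hp)
  · exact EOs_congr _ _ _ _ hc fun m n l hs hp => T2_congr hs (ih l hp)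
  · exact PRs_congr _ _ _ hc fun m n l hs hp => T3_congr hs (ih l hp)

/-! ### Formal properties of the sums over pairs -/

theorem PRs_add : ∀ (c : List ℕ) (F G : ℕ → ℕ → List ℕ → M),
    PRs c (fun m n l => F m n l + G m n l) = PRs c F + PRs c G
  | [], F, G => rfl
  | [b], F, G => by
    simp only [PRs]; split_ifs <;> simp [add_add_add_comm]
  | a :: b :: t, F, G => by
    simp only [PRs]
    rw [← PRs_add t]
    congr 1; funext m n l
    split_ifs <;> (try simp only [add_zero]) <;> ac_rfl

theorem PRs_zero : ∀ (c : List ℕ), PRs c (fun _ _ _ => (0 : M)) = 0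
  | [] => rfl
  | [b] => by simp [PRs]
  | a :: b :: t => by simp [PRs, PRs_zero t]

theorem PRs_map {N : Type*} [AddCommMonoid N] (φ : M →+ N) : ∀ (c : List ℕ)
    (F : ℕ → ℕ → List ℕ → M), φ (PRs c F) = PRs c (fun m n l => φ (F m n l))
  | [], F => rfl
  | [b], F => by simp only [PRs, map_add, apply_ite φ, map_zero]
  | a :: b :: t, F => by
    simp only [PRs, PRs_map φ t, map_add, apply_ite φ, map_zero]

theorem PRs_ite (p : Prop) [Decidable p] (c : List ℕ) (F : ℕ → ℕ → List ℕ → M) :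
    PRs c (fun m n l => if p then F m n l else 0) = if p then PRs c F else 0 := by
  by_cases h : p <;> simp [h, PRs_zero]

theorem EOs_map {N : Type*} [AddCommMonoid N] (φ : M →+ N) (a : ℕ) (c : List ℕ)
    (F : ℕ → ℕ → List ℕ → M) :
    φ (EOs (a :: c) F) = EOs (a :: c) (fun m n l => φ (F m n l)) := by
  simp only [EOs, PRs_map φ, map_add, apply_ite φ, map_zero]

theorem PRs_mem {N : AddSubmonoid M} : ∀ (c : List ℕ)
    (F : ℕ → ℕ → List ℕ → M), (∀ m n l, F m n l ∈ N) → PRs c F ∈ N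
  | [], F, h => h _ _ _
  | [b], F, h => by
    rw [PRs]
    refine add_mem (h _ _ _) ?_
    split_ifs
    exacts [h _ _ _, zero_mem _]
  | a :: b :: t, F, h => by
    rw [PRs]
    refine PRs_mem t _ fun m n l => ?_
    refine add_mem (add_mem (add_mem (h _ _ _) ?_) ?_) ?_ <;> split_ifs <;>
      first | exact h _ _ _ | exact zero_mem _

theorem EOs_mem {N : AddSubmonoid M} (a : ℕ) (c : List ℕ)
    (F : ℕ → ℕ → List ℕ → M) (h : ∀ m n a l, F m n (a :: l) ∈ N) : EOs (a :: c) F ∈ N := by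
  rw [EOs]
  refine PRs_mem c _ fun m n l => add_mem (h _ _ _ _) ?_
  split_ifs
  exacts [h _ _ _ _, zero_mem _]

/-! ### 𝔇 takes values in 𝔥^{≥2} -/

/-- The span of the words `z_{k₁} ⋯ z_{k_r}` with all `k_i ≥ 2`, written in `x` and `y`. -/
def good0 : Submodule ℚ Bw :=
  Submodule.span ℚ {b | ∃ l : List ℕ, (∀ k ∈ l, 2 ≤ k) ∧ b = Finsupp.single (toXY l) 1}

/-- The span of the nonempty words `z_{k₁} ⋯ z_{k_r}` with all `k_i ≥ 2`; these words begin with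
`x`. -/
def good1 : Submodule ℚ Bw :=
  Submodule.span ℚ {b | ∃ l : List ℕ, l ≠ [] ∧ (∀ k ∈ l, 2 ≤ k) ∧ b = Finsupp.single (toXY l) 1}

theorem good1_le : good1 ≤ good0 :=
  Submodule.span_mono fun _ ⟨l, _, h⟩ => ⟨l, h⟩

theorem pre_single (p b : List Bool) (q : ℚ) :
    pre p (Finsupp.single b q) = Finsupp.single (p ++ b) q := by
  simp [pre]

theorem toXY_cons (k : ℕ) (l : List ℕ) :
    toXY (k :: l) = List.replicate (k - 1) false ++ true :: toXY l := by
  simp [toXY]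

theorem toXY_nil : toXY [] = [] := rfl

theorem pre_sx_good {m : ℕ} {v : Bw} (hv : v ∈ good1) : pre (sx m) v ∈ good1 := by
  suffices good1 ≤ good1.comap (pre (sx m)) from this hv
  refine Submodule.span_le.2 ?_
  rintro _ ⟨l, h0, hl, rfl⟩
  obtain ⟨k, t, rfl⟩ := List.exists_cons_of_ne_nil h0
  have hk : 2 ≤ k := hl k (by simp)
  refine Submodule.subset_span ⟨(k + m) :: t, by simp, ?_, ?_⟩
  · intro j hj
    rcases List.mem_cons.1 hj with rfl | hj
    · omega
    · exact hl j (by simp [hj])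
  · rw [pre_single, toXY_cons, toXY_cons, sx, ← List.append_assoc, ← List.replicate_add]
    congr 4
    omega

theorem pre_sxy_good {m : ℕ} (hm : 2 ≤ m) {v : Bw} (hv : v ∈ good0) : pre (sxy m) v ∈ good1 := by
  suffices good0 ≤ good1.comap (pre (sxy m)) from this hv
  refine Submodule.span_le.2 ?_
  rintro _ ⟨l, hl, rfl⟩
  refine Submodule.subset_span ⟨m :: l, by simp, ?_, ?_⟩
  · intro j hj
    rcases List.mem_cons.1 hj with rfl | hj
    · omega
    · exact hl j (by simp [hj])
  · rw [pre_single, toXY_cons, sxy]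
    simp

/-- `𝔇` takes values in `𝔥^{≥2}`, and `𝔇(𝐜)` has no constant term for `𝐜 ≠ ∅`. In the first sum
position `1` survives, so the prefix `x^{#A+#B}` meets a nonempty word; in the other two the prefix
is `z_k` with `k = #A + #B ≥ 2`. -/
theorem Dfuel_good : ∀ (f : ℕ) (c : List ℕ), Dfuel f c ∈ good0 ∧ (c ≠ [] → Dfuel f c ∈ good1)
  | f, [] => by
    refine ⟨?_, by simp⟩
    rw [Dfuel]
    exact Submodule.subset_span ⟨[], by simp, rfl⟩
  | 0, k :: t => by simp [Dfuel]
  | f + 1, k :: t => by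
    have key : Dfuel (f + 1) (k :: t) ∈ good1 := by
      rw [Dfuel_succ]
      refine add_mem (add_mem ?_ ?_) ?_
      · refine EOs_mem (N := good1.toAddSubmonoid) k t _ fun m n a l => ?_
        show _ ∈ good1
        unfold T1
        split_ifs
        · exact Submodule.smul_mem _ _ (pre_sx_good ((Dfuel_good f _).2 (by simp)))
        · exact zero_mem _
      · refine EOs_mem (N := good1.toAddSubmonoid) k t _ fun m n a l => ?_
        show _ ∈ good1
        unfold T2
        split_ifs with h
        · exact Submodule.smul_mem _ _ (pre_sxy_good h (Dfuel_good f _).1)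
        · exact zero_mem _
      · refine PRs_mem (N := good1.toAddSubmonoid) (k :: t) _ fun m n l => ?_
        show _ ∈ good1
        unfold T3
        split_ifs with h
        · exact Submodule.smul_mem _ _ (pre_sxy_good h (Dfuel_good f _).1)
        · exact zero_mem _
    exact ⟨good1_le key, fun _ => key⟩

/-! ### Words beginning with xy -/

/-- The operator `S` on words: `S(xyu) = u`, and `S(w) = 0` if `w` does not begin with `xy`. -/
def Sw : List Bool → Bw
  | false :: true :: u => Finsupp.single u 1
  | _ => 0

/-- The linear extension of `S`. -/
def Sm : Bw →ₗ[ℚ] Bw := Finsupp.linearCombination ℚ Sw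

theorem Sm_single (b : List Bool) (q : ℚ) : Sm (Finsupp.single b q) = q • Sw b := by
  simp [Sm]

/-- `S` kills the first sum in `𝔇`, whose words begin with `xx`. -/
theorem Sm_sx {m : ℕ} (hm : 1 ≤ m) {v : Bw} (hv : v ∈ good1) : Sm (pre (sx m) v) = 0 := by
  suffices good1 ≤ LinearMap.ker (Sm.comp (pre (sx m))) from this hv
  refine Submodule.span_le.2 ?_
  rintro _ ⟨l, h0, hl, rfl⟩
  obtain ⟨k, t, rfl⟩ := List.exists_cons_of_ne_nil h0
  have hk : 2 ≤ k := hl k (by simp)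
  obtain ⟨k, rfl⟩ : ∃ j, k = j + 2 := ⟨k - 2, by omega⟩
  obtain ⟨m, rfl⟩ : ∃ j, m = j + 1 := ⟨m - 1, by omega⟩
  simp only [SetLike.mem_coe, LinearMap.mem_ker, LinearMap.comp_apply, pre_single, Sm_single,
    one_smul, toXY_cons, sx]
  rw [← List.append_assoc, ← List.replicate_add,
    show m + 1 + (k + 2 - 1) = (m + k) + 1 + 1 by omega]
  simp [List.replicate_succ, Sw]

/-- In the last two sums of `𝔇`, `S` selects the terms with `#A + #B = 2`. -/
theorem Sm_sxy {m : ℕ} (hm : 2 ≤ m) (v : Bw) :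
    Sm (pre (sxy m) v) = if m = 2 then v else 0 := by
  induction v using Finsupp.induction_linear with
  | zero => simp
  | add f g hf hg => rw [map_add, map_add, hf, hg]; split_ifs <;> simp
  | single b q =>
    rw [pre_single, Sm_single]
    by_cases h : m = 2
    · subst h; simp [sxy, Sw]
    · obtain ⟨m, rfl⟩ : ∃ j, m = j + 3 := ⟨m - 3, by omega⟩
      simp [sxy, Sw, List.replicate_succ]

/-! ### Choices with #A + #B = 2 -/

section Sel
variable {L : Type*} [AddCommGroup L]

/-- The sum of `g` over the tuples obtained by decreasing one entry `> 1`. -/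
def Dec1 : List ℕ → (List ℕ → L) → L
  | [], _ => 0
  | a :: t, g => (if 1 < a then g ((a - 1) :: t) else 0) + Dec1 t fun l => g (a :: l)

/-- The sum of `g` over the tuples obtained by decreasing two distinct entries `> 1`. -/
def All2 : List ℕ → (List ℕ → L) → L
  | [], _ => 0
  | a :: t, g => (if 1 < a then Dec1 t (fun l => g ((a - 1) :: l)) else 0) +
      All2 t fun l => g (a :: l)

/-- The sum of `g` over the tuples obtained by decreasing both entries of one of the pairs
`{1, 2}, {3, 4}, …` of positions, both entries being `> 1`. -/
def Adj : List ℕ → (List ℕ → L) → L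
  | a :: b :: t, g => (if 1 < a ∧ 1 < b then g ((a - 1) :: (b - 1) :: t) else 0) +
      Adj t fun l => g (a :: b :: l)
  | _, _ => 0

/-- The sum of `g` over the tuples obtained by deleting one of the pairs `{1, 2}, {3, 4}, …` of
positions, both entries being `1`. -/
def Del : List ℕ → (List ℕ → L) → L
  | a :: b :: t, g => (if a = 1 ∧ b = 1 then g t else 0) + Del t fun l => g (a :: b :: l)
  | _, _ => 0

theorem PRs_00 : ∀ (c : List ℕ) (g : List ℕ → L),
    PRs c (fun m n l => if m = 0 ∧ n = 0 then g l else 0) = g c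
  | [], g => by simp [PRs]
  | [b], g => by simp [PRs]
  | a :: b :: t, g => by
    simp only [PRs, Nat.add_eq_zero_iff, one_ne_zero, OfNat.ofNat_ne_zero, and_false, false_and,
      if_false, ite_self, add_zero]
    exact PRs_00 t fun l => g (a :: b :: l)

theorem PRs_01 : ∀ (c : List ℕ) (g : List ℕ → L),
    PRs c (fun m n l => if m = 0 ∧ n = 1 then g l else 0) = Dec1 c g
  | [], g => by simp [PRs, Dec1]
  | [b], g => by simp [PRs, Dec1]
  | a :: b :: t, g => by
    simp only [PRs, Nat.add_eq_zero_iff, one_ne_zero, OfNat.ofNat_ne_zero, and_false, false_and,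
      if_false, ite_self, add_zero, Nat.add_eq_right, PRs_add, PRs_ite, PRs_00, PRs_01 t, Dec1]
    abel

/-- Choices with `#A = 0`, `#B = 2`: two entries decreased, not both in one pair. -/
theorem PRs_02 : ∀ (c : List ℕ) (g : List ℕ → L),
    PRs c (fun m n l => if m = 0 ∧ n = 2 then g l else 0) = All2 c g - Adj c g
  | [], g => by simp [PRs, All2, Adj]
  | [b], g => by simp [PRs, All2, Adj, Dec1]
  | a :: b :: t, g => by
    simp only [PRs, Nat.add_eq_zero_iff, OfNat.ofNat_ne_zero, and_false, false_and,
      if_false, ite_self, add_zero, Nat.reduceEqDiff, PRs_add, PRs_ite, PRs_01, PRs_02 t, All2,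
      Adj, Dec1]
    by_cases ha : 1 < a <;> by_cases hb : 1 < b <;> simp [ha, hb] <;> abel

/-- `A` is a union of pairs, so `#A = 1` does not occur. -/
theorem PRs_1 : ∀ (c : List ℕ) (g : ℕ → List ℕ → L),
    PRs c (fun m n l => if m = 1 then g n l else 0) = 0
  | [], g => by simp [PRs]
  | [b], g => by simp [PRs]
  | a :: b :: t, g => by
    simp only [PRs, Nat.reduceEqDiff, PRs_add, PRs_ite, if_false, ite_self, PRs_zero, add_zero]
    rw [PRs_1 t fun n l => g n (a :: b :: l), PRs_1 t fun n l => g (n + 1) _,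
      PRs_1 t fun n l => g (n + 1) _]
    simp

theorem PRs_20 : ∀ (c : List ℕ) (g : List ℕ → L),
    PRs c (fun m n l => if m = 2 ∧ n = 0 then g l else 0) = Del c g
  | [], g => by simp [PRs, Del]
  | [b], g => by simp [PRs, Del]
  | a :: b :: t, g => by
    simp only [PRs, Nat.add_eq_zero_iff, one_ne_zero, and_false,
      if_false, ite_self, add_zero, Nat.add_eq_right, PRs_add, PRs_ite, PRs_00, PRs_20 t, Del]
    abel

/-- The part with `#A + #B = 2` of a signed sum `PRs`. -/
theorem PRs_sel [Module ℚ L] (c : List ℕ) (g : List ℕ → L) :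
    PRs c (fun m n l => if m + n = 2 then (-1 : ℚ) ^ n • g l else 0) =
      All2 c g - Adj c g + Del c g := by
  have : (fun m n l => if m + n = 2 then (-1 : ℚ) ^ n • g l else 0) = fun m n l =>
      ((if m = 0 ∧ n = 2 then g l else 0) + (if m = 2 ∧ n = 0 then g l else 0)) +
        (if m = 1 then (if n = 1 then - g l else 0) else 0) := by
    funext m n l
    by_cases h : m + n = 2
    · obtain ⟨rfl, rfl⟩ | ⟨rfl, rfl⟩ | ⟨rfl, rfl⟩ :
        (m = 0 ∧ n = 2) ∨ (m = 1 ∧ n = 1) ∨ (m = 2 ∧ n = 0) := by omega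
      all_goals simp
    · have h1 : ¬ (m = 0 ∧ n = 2) := by omega
      have h2 : ¬ (m = 2 ∧ n = 0) := by omega
      by_cases h3 : m = 1
      · have h4 : n ≠ 1 := by omega
        simp [h, h1, h2, h4]
      · simp [h, h1, h2, h3]
  rw [this, PRs_add, PRs_add, PRs_02, PRs_20, PRs_1 c fun n l => if n = 1 then - g l else 0,
    add_zero]

/-- The part with `#A + #B = 2` of a signed sum `EOs`. The term `All2 (a :: c) g` is the same as for
`PRs`, since it does not depend on how the positions are paired. -/
theorem EOs_sel [Module ℚ L] (a : ℕ) (c : List ℕ) (g : List ℕ → L) :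
    EOs (a :: c) (fun m n l => if m + n = 2 then (-1 : ℚ) ^ n • g l else 0) =
      All2 (a :: c) g - Adj c (fun l => g (a :: l)) + Del c (fun l => g (a :: l)) := by
  rw [EOs, PRs_add, PRs_sel, PRs_ite]
  have : (fun m n l => if m + (n + 1) = 2 then (-1 : ℚ) ^ (n + 1) • g ((a - 1) :: l) else 0) =
      fun m n l => (if m = 0 ∧ n = 1 then g ((a - 1) :: l) else 0) +
        (if m = 1 then (if n = 0 then - g ((a - 1) :: l) else 0) else 0) := by
    funext m n l
    by_cases h : m + (n + 1) = 2
    · obtain ⟨rfl, rfl⟩ | ⟨rfl, rfl⟩ :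
        (m = 0 ∧ n = 1) ∨ (m = 1 ∧ n = 0) := by omega
      all_goals simp
    · have h1 : ¬ (m = 0 ∧ n = 1) := by omega
      by_cases h3 : m = 1
      · have h4 : n ≠ 0 := by omega
        simp [h, h1, h4]
      · simp [h, h1, h3]
  rw [this, PRs_add, PRs_01 c fun l => g ((a - 1) :: l),
    PRs_1 c fun n l => if n = 0 then - g ((a - 1) :: l) else 0, add_zero, All2]
  abel

/-- Decreasing pairs minus deleting pairs, for the pairs `{1, 2}, {3, 4}, …` of positions. -/
def AD (c : List ℕ) (g : List ℕ → L) : L := Adj c g - Del c g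

end Sel

theorem DropD_good0 (c : List ℕ) : DropD c ∈ good0 := (Dfuel_good _ c).1

theorem DropD_good1 (a : ℕ) (c : List ℕ) : DropD (a :: c) ∈ good1 :=
  (Dfuel_good _ (a :: c)).2 (by simp)

/-- `S(𝔇(𝐜))` only involves pairs of neighbouring positions. The words of `𝔇(𝐜)` beginning with `xy`
come from the second and third sums with `#A + #B = 2`. These have opposite signs, so the terms
decreasing two non-neighbouring entries cancel. -/
theorem Sm_DropD (a : ℕ) (r : List ℕ) (hc : ∀ j ∈ a :: r, 1 ≤ j) :
    Sm (DropD (a :: r)) = AD r (fun l => DropD (a :: l)) - AD (a :: r) DropD := by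
  rw [DropD_cons a r hc, map_add, map_add]
  have e := fun F => EOs_map Sm.toAddMonoidHom a r F
  have e' := fun F => PRs_map Sm.toAddMonoidHom (a :: r) F
  simp only [LinearMap.toAddMonoidHom_coe] at e e'
  have h1 : EOs (a :: r) (fun m n l => Sm (T1 DropD m n l)) = 0 := by
    refine (AddSubmonoid.mem_bot).1 (EOs_mem a r _ fun m n a l => ?_)
    -- Position `1` stays in the tuple, so `𝔇` is evaluated at a nonempty tuple here.
    rw [AddSubmonoid.mem_bot, T1]
    split_ifs with h
    · rw [map_smul, Sm_sx h (DropD_good1 _ _), smul_zero]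
    · simp
  have h2 : (fun m n l => Sm (T2 DropD m n l)) =
      fun m n l => - (if m + n = 2 then (-1 : ℚ) ^ n • DropD l else 0) := by
    funext m n l
    rw [T2]
    by_cases h : 2 ≤ m + n
    · rw [if_pos h, map_smul, Sm_sxy h, pow_succ]
      split_ifs <;> simp
    · rw [if_neg h, if_neg (by omega)]; simp
  have h3 : (fun m n l => Sm (T3 DropD m n l)) =
      fun m n l => (if m + n = 2 then (-1 : ℚ) ^ n • DropD l else 0) := by
    funext m n l
    rw [T3]
    by_cases h : 2 ≤ m + n
    · rw [if_pos h, map_smul, Sm_sxy h]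
      split_ifs <;> simp
    · rw [if_neg h, if_neg (by omega)]; simp
  have h4 : EOs (a :: r) (fun m n l => - (if m + n = 2 then (-1 : ℚ) ^ n • DropD l else 0)) =
      - EOs (a :: r) (fun m n l => if m + n = 2 then (-1 : ℚ) ^ n • DropD l else 0) := by
    have := EOs_map (negAddMonoidHom (α := Bw)) a r
      (fun m n l => if m + n = 2 then (-1 : ℚ) ^ n • DropD l else 0)
    simp only [coe_negAddMonoidHom] at this
    exact this.symm
  rw [e, e, e', h1, h2, h3, h4, PRs_sel, EOs_sel, AD, AD]
  abel

/-! ### 𝒟 on words without z₁ -/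

/-- The run lengths `(a₁, 1, a₂, 1, …)` of `z_{a₁+1} z_{a₂+1} ⋯ = x^{a₁} y x^{a₂} y ⋯`. -/
def run : List ℕ → List ℕ
  | [] => []
  | a :: as => a :: 1 :: run as

/-- The sum `PRs (run as) F`, with `F` taken as a function of the tuple of the `aᵢ` rather than of
`run as`. Since every second entry of `run as` is `1`, each block `(aᵢ, 1)` is kept, has `aᵢ`
decreased, or is deleted if `aᵢ = 1`. -/
def QQ : List ℕ → (ℕ → ℕ → List ℕ → M) → M
  | [], F => F 0 0 []
  | a :: as, F => QQ as fun m n l => F m n (a :: l) +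
      (if 1 < a then F m (n + 1) ((a - 1) :: l) else 0) + (if a = 1 then F (m + 2) n l else 0)

theorem PRs_run : ∀ (as : List ℕ) (F : ℕ → ℕ → List ℕ → M),
    PRs (run as) F = QQ as fun m n l => F m n (run l)
  | [], F => rfl
  | a :: as, F => by
    rw [run, PRs, PRs_run as, QQ]
    simp [run]

/-- Regrouping `(1, a₁, 1, a₂, …, 1)` into pairs `(1, aᵢ)` followed by a last `1` leads to the same
choices for the `aᵢ`. -/
theorem PRs_run' : ∀ (as : List ℕ) (F : ℕ → ℕ → List ℕ → M),
    PRs (1 :: run as) F = QQ as fun m n l => F m n (1 :: run l)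
  | [], F => by simp [run, PRs, QQ]
  | a :: as, F => by
    rw [run, PRs, PRs_run' as, QQ]
    simp [run]

theorem QQ_congr : ∀ (as : List ℕ) (F F' : ℕ → ℕ → List ℕ → M), (∀ k ∈ as, 1 ≤ k) →
    (∀ m n l, l.sum + l.length + m + n = as.sum + as.length → (∀ k ∈ l, 1 ≤ k) →
      F m n l = F' m n l) → QQ as F = QQ as F'
  | [], F, F', _, h => h 0 0 [] (by simp) (by simp)
  | a :: as, F, F', hc, h => by
    have ha : 1 ≤ a := hc a (by simp)
    rw [QQ, QQ]
    refine QQ_congr as _ _ (fun k hk => hc k (by simp [hk])) fun m n l hs hp => ?_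
    simp only [List.sum_cons, List.length_cons] at h
    rw [h m n (a :: l) (by simp; omega) (by simp; exact ⟨ha, hp⟩)]
    congr 1
    · congr 1
      by_cases ha' : 1 < a
      · rw [h m (n + 1) ((a - 1) :: l) (by simp; omega) (by simp; exact ⟨by omega, hp⟩)]
      · simp [ha']
    · by_cases ha' : a = 1
      · rw [h (m + 2) n l (by omega) hp]
      · simp [ha']

theorem QQ_zero : ∀ (as : List ℕ), QQ as (fun _ _ _ => (0 : M)) = 0
  | [] => rfl
  | a :: as => by simp [QQ, QQ_zero as]

theorem QQ_add : ∀ (c : List ℕ) (F G : ℕ → ℕ → List ℕ → M),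
    QQ c (fun m n l => F m n l + G m n l) = QQ c F + QQ c G
  | [], F, G => rfl
  | a :: t, F, G => by
    simp only [QQ]
    rw [← QQ_add t]
    congr 1; funext m n l
    split_ifs <;> (try simp only [add_zero]) <;> ac_rfl

theorem QQ_00 : ∀ (as : List ℕ) (g : List ℕ → M),
    QQ as (fun m n l => if m = 0 ∧ n = 0 then g l else 0) = g as
  | [], g => by simp [QQ]
  | a :: as, g => by
    simp only [QQ, Nat.add_eq_zero_iff, one_ne_zero, OfNat.ofNat_ne_zero, and_false, false_and,
      if_false, ite_self, add_zero]
    exact QQ_00 as fun l => g (a :: l)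

/-- The word of `run as`. -/
def wd (as : List ℕ) : Bw := Finsupp.single (toXY (as.map (· + 1))) 1

theorem wd_cons (a : ℕ) (as : List ℕ) : wd (a :: as) = pre (sxy (a + 1)) (wd as) := by
  simp [wd, pre_single, sxy, toXY_cons]

theorem pre_pre (p q : List Bool) (v : Bw) : pre p (pre q v) = pre (p ++ q) v := by
  induction v using Finsupp.induction_linear with
  | zero => simp
  | add f g hf hg => simp only [map_add, hf, hg]
  | single b c => simp [pre_single]

theorem sx_sxy (m k : ℕ) (hk : 1 ≤ k) : sx m ++ sxy k = sxy (m + k) := by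
  rw [sx, sxy, sxy, ← List.append_assoc, ← List.replicate_add]
  congr 2; omega

/-- `𝔇` returns the word itself if all runs of `y` have length `1`. For fixed choices at the blocks
after the first one, the contributions of all three sums are multiples of one word, and they cancel
unless all those choices are trivial. -/
theorem DropD_run : ∀ (N : ℕ) (as : List ℕ), as.sum + as.length ≤ N → (∀ k ∈ as, 1 ≤ k) →
    DropD (run as) = wd as
  | N, [], _, _ => by simp [run, DropD_nil, wd, toXY]
  | 0, a :: as, h, _ => by simp at h
  | N + 1, a :: as, h, hc => by
    have hpos : ∀ as : List ℕ, (∀ k ∈ as, 1 ≤ k) → ∀ k ∈ run as, 1 ≤ k := by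
      intro as
      induction as with
      | nil => simp [run]
      | cons a as ih => intro h; simp only [run, List.forall_mem_cons] at h ⊢; exact ⟨h.1, le_rfl, ih h.2⟩
    have ha : 1 ≤ a := hc a (by simp)
    rw [run, DropD_cons _ _ (hpos (a :: as) hc), EOs, EOs, PRs_run', PRs_run',
      show a :: 1 :: run as = run (a :: as) from rfl, PRs_run, QQ, ← QQ_add, ← QQ_add]
    -- The right-hand side is the contribution of the trivial choice at the later blocks.
    rw [← QQ_00 as fun l => wd (a :: l)]
    refine QQ_congr _ _ _ (fun k hk => hc k (by simp [hk])) fun m n l hs hp => ?_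
    simp only [List.sum_cons, List.length_cons] at h
    have i1 : 1 ≤ m + n → DropD (run (a :: l)) = wd (a :: l) := fun hmn =>
      DropD_run N (a :: l) (by simp; omega) (by simp; exact ⟨ha, hp⟩)
    have i2 : 1 < a → DropD (run ((a - 1) :: l)) = wd ((a - 1) :: l) := fun hmn =>
      DropD_run N ((a - 1) :: l) (by simp; omega) (by simp; exact ⟨by omega, hp⟩)
    have i3 : DropD (run l) = wd l := DropD_run N l (by omega) hp
    have t23 : ∀ D m n l, T2 D m n l = - T3 D m n l := by
      intro D m n l; unfold T2 T3; split_ifs <;> simp [pow_succ]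
    simp only [show ∀ b, b :: 1 :: run l = run (b :: l) from fun _ => rfl, t23]
    -- `T2` and `T3` cancel except where the first block is deleted; the case of one choice `(m, n, l)`
    -- at the later blocks.
    have main : T1 DropD m n (run (a :: l)) +
        (if 1 < a then T1 DropD m (n + 1) (run ((a - 1) :: l)) else 0) +
        (if a = 1 then T3 DropD (m + 2) n (run l) else 0) =
        if m = 0 ∧ n = 0 then wd (a :: l) else 0 := by
      rw [wd_cons]
      by_cases ha1 : a = 1
      · subst ha1
        rw [if_neg (by omega), if_pos rfl, T3, if_pos (by omega), i3]
        by_cases h0 : m = 0 ∧ n = 0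
        · obtain ⟨rfl, rfl⟩ := h0
          simp [T1]
        · rw [if_neg h0, T1, if_pos (by omega), i1 (by omega), wd_cons, pre_pre,
            sx_sxy _ _ (by omega), show m + n + (1 + 1) = m + 2 + n by ring]
          simp [pow_succ]
      · have ha2 : 1 < a := by omega
        rw [if_pos ha2, if_neg ha1, T1, T1, if_pos (show 1 ≤ m + (n + 1) by omega), i2 ha2, wd_cons,
          pre_pre, sx_sxy _ _ (by omega), show m + (n + 1) + (a - 1 + 1) = m + n + (a + 1) by omega]
        by_cases h0 : m = 0 ∧ n = 0
        · obtain ⟨rfl, rfl⟩ := h0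
          simp
        · rw [if_neg h0, if_pos (by omega), i1 (by omega), wd_cons, pre_pre, sx_sxy _ _ (by omega)]
          simp [pow_succ]
    rw [← main]
    by_cases ha2 : 1 < a
    · simp only [if_pos ha2]; abel
    · simp only [if_neg ha2]; abel

/-! ### Run lengths -/

/-- The word with run lengths `c₁, c₂, …`, whose first run consists of the given letter. -/
def dec : Bool → List ℕ → List Bool
  | _, [] => []
  | c, a :: t => List.replicate a c ++ dec (!c) t

theorem dec_head (c : Bool) (t : List ℕ) (h : ∀ k ∈ t, 1 ≤ k) :
    dec c t = [] ∧ t = [] ∨ ∃ u, dec c t = c :: u := by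
  cases t with
  | nil => left; simp [dec]
  | cons a t =>
    right
    obtain ⟨a, rfl⟩ : ∃ j, a = j + 1 := ⟨a - 1, by have := h a (by simp); omega⟩
    exact ⟨_, by rw [dec, List.replicate_succ, List.cons_append]⟩

theorem rle_dec : ∀ (c : Bool) (t : List ℕ), (∀ k ∈ t, 1 ≤ k) → rle (dec c t) = t
  | c, [], _ => by simp [dec, rle]
  | c, a :: t, h => by
    obtain ⟨a, rfl⟩ : ∃ j, a = j + 1 := ⟨a - 1, by have := h a (by simp); omega⟩
    have ht : ∀ k ∈ t, 1 ≤ k := fun k hk => h k (by simp [hk])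
    have ih := rle_dec (!c) t ht
    have hw : ∀ v : List Bool, (v = [] ∨ ∃ u, v = (!c) :: u) → ∀ a,
        ((List.replicate a c ++ v).takeWhile (· = c)).length = a ∧
        (List.replicate a c ++ v).dropWhile (· = c) = v := by
      intro v hv a
      induction a with
      | zero => rcases hv with rfl | ⟨u, rfl⟩ <;> simp
      | succ a iha => simp only [List.replicate_succ, List.cons_append]; simpa using iha
    have hv : dec (!c) t = [] ∨ ∃ u, dec (!c) t = (!c) :: u := by
      rcases dec_head (!c) t ht with h | h
      · exact Or.inl h.1
      · exact Or.inr h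
    rw [dec, List.replicate_succ, List.cons_append, rle, (hw _ hv a).1, (hw _ hv a).2, ih]

/-- Every word ending in `y` is given by its run lengths, of which there is an even number if and
only if the word begins with `x`. -/
theorem exists_dec : ∀ (b : List Bool) (a : Bool), ∃ c : List ℕ, c ≠ [] ∧ (∀ k ∈ c, 1 ≤ k) ∧
    a :: (b ++ [true]) = dec a c ∧ (Even c.length ↔ a = false)
  | [], false => ⟨[1, 1], by simp, by simp, by simp [dec], by simp⟩
  | [], true => ⟨[2], by simp, by simp, by simp [dec], by simp⟩
  | a' :: b, a => by
    obtain ⟨c, h0, h1, h2, h3⟩ := exists_dec b a'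
    by_cases haa : a = a'
    · subst haa
      obtain ⟨k, t, rfl⟩ := List.exists_cons_of_ne_nil h0
      refine ⟨(k + 1) :: t, by simp, ?_, ?_, by simpa using h3⟩
      · simp only [List.forall_mem_cons] at h1 ⊢; exact ⟨by omega, h1.2⟩
      · rw [List.cons_append, h2, dec, dec, List.replicate_succ, List.cons_append]
    · have : a' = !a := by cases a <;> cases a' <;> simp_all
      subst this
      refine ⟨1 :: c, by simp, by simpa using h1, ?_, ?_⟩
      · rw [List.cons_append, h2, dec]; simp
      · rw [List.length_cons, Nat.even_add_one, h3]; cases a <;> simp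

/-! ### The operator G on run lengths -/

/-- The term of `G` coming from the factor at the beginning of the word. -/
def Lw : List Bool → Bw
  | true :: true :: false :: u => Finsupp.single (true :: u) 1
  | false :: true :: true :: u => - Finsupp.single (true :: u) 1
  | _ => 0

/-- The operator `G` on words: the sum over all replacements of a factor `yyx` by `y`, minus the sum
over all replacements of a factor `xyy` by `y`. -/
def Gw : List Bool → Bw
  | [] => 0
  | a :: t => Lw (a :: t) + pre [a] (Gw t)

/-- `G` on a word beginning with `y^{b+1} x`. -/
theorem Gw_y : ∀ (b : ℕ) (v : List Bool), Gw (List.replicate (b + 1) true ++ false :: v) =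
    (if 1 ≤ b then Finsupp.single (List.replicate b true ++ v) 1 else 0) +
      pre (List.replicate (b + 1) true) (Gw (false :: v))
  | 0, v => by simp [Gw, Lw]
  | b + 1, v => by
    rw [List.replicate_succ, List.cons_append, Gw, Gw_y b v, map_add, pre_pre]
    cases b with
    | zero => simp [Lw]
    | succ b => simp [Lw, List.replicate_succ, pre_single]

theorem Gw_y_end : ∀ (b : ℕ), Gw (List.replicate b true) = 0
  | 0 => rfl
  | b + 1 => by
    rw [List.replicate_succ, Gw, Gw_y_end b, map_zero, add_zero]
    rcases b with _ | _ | b <;> simp [Lw, List.replicate_succ]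

/-- `G` on a word beginning with a run of `x` followed by a run of `y`. -/
theorem Gw_x (b : ℕ) (v : List Bool) (hv : v = [] ∨ ∃ u, v = false :: u) : ∀ (a : ℕ),
    Gw (List.replicate (a + 1) false ++ (List.replicate (b + 1) true ++ v)) =
    (if 1 ≤ b then - Finsupp.single (List.replicate a false ++ (List.replicate b true ++ v)) 1
      else 0) +
      pre (List.replicate (a + 1) false) (Gw (List.replicate (b + 1) true ++ v))
  | 0 => by
    rcases b with _ | b
    · rcases hv with rfl | ⟨u, rfl⟩ <;> simp [Gw, Lw]
    · simp [Gw, Lw, List.replicate_succ]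
  | a + 1 => by
    rw [List.replicate_succ, List.cons_append, Gw, Gw_x b v hv a, map_add, pre_pre]
    rw [List.replicate_succ, List.cons_append, Lw]
    · split_ifs <;> simp [pre_single, List.replicate_succ]
    · simp
    · simp

section
variable {L : Type*} [AddCommGroup L] [Module ℚ L]

/-- The linear extension of a function on words. -/
def lin (h : List Bool → L) : Bw →ₗ[ℚ] L := Finsupp.linearCombination ℚ h

theorem lin_single (h : List Bool → L) (b : List Bool) : lin h (Finsupp.single b 1) = h b := by
  simp [lin]

theorem lin_pre (h : List Bool → L) (p : List Bool) (v : Bw) :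
    lin h (pre p v) = lin (fun u => h (p ++ u)) v := by
  induction v using Finsupp.induction_linear with
  | zero => simp
  | add f g hf hg => simp only [map_add, hf, hg]
  | single b c => simp [pre_single, lin]

theorem AD_cons (a b : ℕ) (t : List ℕ) (g : List ℕ → L) : AD (a :: b :: t) g =
    (if 1 < a ∧ 1 < b then g ((a - 1) :: (b - 1) :: t) else 0) - (if a = 1 ∧ b = 1 then g t else 0) +
      AD t (fun l => g (a :: b :: l)) := by
  simp only [AD, Adj, Del]; abel

theorem AD_congr : ∀ (c : List ℕ) (g g' : List ℕ → L), (∀ k ∈ c, 1 ≤ k) →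
    (∀ l, (∀ k ∈ l, 1 ≤ k) → g l = g' l) → AD c g = AD c g'
  | [], _, _, _, _ => rfl
  | [_], _, _, _, _ => rfl
  | a :: b :: t, g, g', hc, h => by
    simp only [List.forall_mem_cons] at hc
    rw [AD_cons, AD_cons, h t hc.2.2, AD_congr t _ (fun l => g' (a :: b :: l)) hc.2.2
      (fun l hl => h _ (by simp only [List.forall_mem_cons]; exact ⟨hc.1, hc.2.1, hl⟩))]
    congr 2
    by_cases hab : 1 < a ∧ 1 < b
    · rw [h]
      simp only [List.forall_mem_cons]; exact ⟨by omega, by omega, hc.2.2⟩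
    · simp [hab]

/-- `G + S` in terms of run lengths. Replacing `yyx` or `xyy` by `y` decreases a run of `y` of
length at least `2` and a neighbouring run of `x` by one each. If that run of `x` has length `1`,
the two runs of `y` around it merge. At such an `x` the replacements on its two sides cancel if both
runs of `y` have length at least `2`; if only one does, a term remains that amounts to deleting `x`
together with the other run of `y`. For an `x` at the beginning of the word the missing left
neighbour is supplied by `S`. -/
theorem AD_eq : ∀ (a : ℕ) (r : List ℕ) (h : List Bool → L), (∀ k ∈ a :: r, 1 ≤ k) →
    Even (a :: r).length →
    lin h (Gw (dec false (a :: r))) + lin h (Sw (dec false (a :: r))) =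
      AD r (fun l => h (dec false (a :: l))) - AD (a :: r) (fun l => h (dec false l))
  | a, [], h, _, he => by simp at he
  | a, [b], h, hc, _ => by
    simp only [List.forall_mem_cons] at hc
    obtain ⟨a, rfl⟩ : ∃ j, a = j + 1 := ⟨a - 1, by omega⟩
    obtain ⟨b, rfl⟩ : ∃ j, b = j + 1 := ⟨b - 1, by omega⟩
    have := Gw_x b [] (Or.inl rfl) a
    rw [List.append_nil, Gw_y_end, map_zero, add_zero] at this
    rw [AD_cons]
    simp only [dec, Bool.not_false, List.append_nil, this]
    rcases a with _ | a <;> rcases b with _ | b <;>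
      simp [AD, Adj, Del, lin_single, Sw, List.replicate_succ, dec]
  | a, b :: a' :: t, h, hc, he => by
    simp only [List.forall_mem_cons] at hc
    obtain ⟨ha, hb, ha', ht⟩ := hc
    obtain ⟨a, rfl⟩ : ∃ j, a = j + 1 := ⟨a - 1, by omega⟩
    obtain ⟨b, rfl⟩ : ∃ j, b = j + 1 := ⟨b - 1, by omega⟩
    obtain ⟨a', rfl⟩ : ∃ j, a' = j + 1 := ⟨a' - 1, by omega⟩
    -- The first two runs are absorbed into the function `h`.
    have ih := AD_eq (a' + 1) t
      (fun u => h (List.replicate (a + 1) false ++ (List.replicate (b + 1) true ++ u)))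
      (by simp only [List.forall_mem_cons]; exact ⟨by omega, ht⟩)
      (by simpa [Nat.even_add_one] using he)
    have hv : dec false ((a' + 1) :: t) = false :: (List.replicate a' false ++ dec true t) := by
      simp [dec, List.replicate_succ]
    have hG : Gw (dec false ((a + 1) :: (b + 1) :: (a' + 1) :: t)) =
        (if 1 ≤ b then - Finsupp.single (List.replicate a false ++ (List.replicate b true ++
          dec false ((a' + 1) :: t))) 1 else 0) +
        ((if 1 ≤ b then Finsupp.single (List.replicate (a + 1) false ++ (List.replicate b true ++
          (List.replicate a' false ++ dec true t))) 1 else 0) +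
        pre (List.replicate (a + 1) false ++ List.replicate (b + 1) true)
          (Gw (dec false ((a' + 1) :: t)))) := by
      rw [dec, dec, Bool.not_false, Bool.not_true, Gw_x b _ (Or.inr ⟨_, hv⟩) a]
      congr 1
      rw [hv, Gw_y, map_add, pre_pre]
      congr 1
      split_ifs <;> simp [pre_single]
    have hS : Sw (dec false ((a + 1) :: (b + 1) :: (a' + 1) :: t)) =
        if a = 0 then Finsupp.single (List.replicate b true ++ dec false ((a' + 1) :: t)) 1
        else 0 := by
      rw [dec, dec]
      rcases a with _ | a <;> simp [Sw, List.replicate_succ]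
    have hS' : lin (fun u => h (List.replicate (a + 1) false ++ (List.replicate (b + 1) true ++ u)))
        (Sw (dec false ((a' + 1) :: t))) =
        if a' = 0 then h (List.replicate (a + 1) false ++ (List.replicate b true ++ dec true t))
        else 0 := by
      rcases t with _ | ⟨b', t⟩
      · simp only [List.length_cons, List.length_nil] at he; exact absurd he (by decide)
      · obtain ⟨b', rfl⟩ : ∃ j, b' = j + 1 := ⟨b' - 1, by have := ht b' (by simp); omega⟩
        rcases a' with _ | a'
        · have e : dec false ((0 + 1) :: (b' + 1) :: t) =
            false :: true :: (List.replicate b' true ++ dec false t) := by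
            simp [dec, List.replicate_succ]
          rw [e, Sw, lin_single, if_pos rfl, dec]
          congr 2
          rw [List.replicate_succ', List.append_assoc, List.replicate_succ (n := b')]
          rfl
        · simp [Sw, List.replicate_succ, dec]
    rw [hS'] at ih
    have hd1 : ∀ l, dec false ((a + 1) :: (b + 1) :: l) =
      List.replicate (a + 1) false ++ (List.replicate (b + 1) true ++ dec false l) := fun _ => rfl
    have hd2 : ∀ l, dec false ((a + 1) :: (b + 1) :: (a' + 1) :: l) =
      List.replicate (a + 1) false ++ (List.replicate (b + 1) true ++ dec false ((a' + 1) :: l)) :=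
        fun _ => rfl
    have hlp : lin h (pre (List.replicate (a + 1) false ++ List.replicate (b + 1) true)
        (Gw (dec false ((a' + 1) :: t)))) = lin (fun u => h (List.replicate (a + 1) false ++
          (List.replicate (b + 1) true ++ u))) (Gw (dec false ((a' + 1) :: t))) := by
      rw [lin_pre]; simp only [List.append_assoc]
    have hG' := eq_sub_of_add_eq ih
    rw [AD_cons (b + 1), AD_cons (a + 1), hG, hS, map_add, map_add, hlp, hG']
    simp only [hd1, hd2]
    clear ih hG hS hS' hlp hG' he
    rcases a with _ | a <;> rcases b with _ | b <;> rcases a' with _ | a' <;>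
      simp [lin_single, dec] <;> abel
end

/-! ### The identity S ∘ 𝒟 = 𝒟 ∘ (G + S) -/

/-- `𝒟` as a linear operator on words in `x` and `y`. -/
def Dm : Bw →ₗ[ℚ] Bw := lin fun b => DropD (rle b)

/-- The linear extension of `G`. -/
def Gm : Bw →ₗ[ℚ] Bw := lin Gw

/-- The span of the words that begin with `x` and end with `y`. -/
def adm : Submodule ℚ Bw :=
  Submodule.span ℚ {v | ∃ b : List Bool, v = Finsupp.single (false :: (b ++ [true])) 1}

theorem Sm_Dm_word (b : List Bool) :
    Sm (Dm (Finsupp.single (false :: (b ++ [true])) 1)) =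
      Dm (Gw (false :: (b ++ [true]))) + Dm (Sw (false :: (b ++ [true]))) := by
  obtain ⟨c, h0, hc, hb, hE⟩ := exists_dec b false
  obtain ⟨a, r, rfl⟩ := List.exists_cons_of_ne_nil h0
  have hE' : Even (a :: r).length := hE.2 rfl
  have hc' : ∀ k ∈ r, 1 ≤ k := fun k hk => hc k (by simp [hk])
  rw [hb, Dm, AD_eq a r _ hc hE', lin_single, rle_dec _ _ hc, Sm_DropD a r hc]
  congr 1
  · refine AD_congr r _ _ hc' fun l hl => ?_
    rw [rle_dec]
    simp only [List.forall_mem_cons]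
    exact ⟨hc a (by simp), hl⟩
  · exact AD_congr _ _ _ hc fun l hl => by rw [rle_dec _ _ hl]

/-- `S ∘ 𝒟 = 𝒟 ∘ (G + S)` on words that begin with `x` and end with `y`. -/
theorem Sm_Dm {v : Bw} (hv : v ∈ adm) : Sm (Dm v) = Dm (Gm v) + Dm (Sm v) := by
  have h : adm ≤ LinearMap.eqLocus (Sm.comp Dm) (Dm.comp Gm + Dm.comp Sm) := by
    refine Submodule.span_le.2 ?_
    rintro _ ⟨b, rfl⟩
    simp only [SetLike.mem_coe, LinearMap.mem_eqLocus, LinearMap.comp_apply, LinearMap.add_apply]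
    rw [Sm_Dm_word, Gm, lin_single, Sm_single, one_smul]
  exact h hv

/-! ### Shuffling with xy -/

/-- The linear extension of `Lw`. -/
def Lm : Bw →ₗ[ℚ] Bw := lin Lw

theorem single_cons (a : Bool) (u : List Bool) :
    (Finsupp.single (a :: u) 1 : Bw) = pre [a] (Finsupp.single u 1) := by
  rw [pre_single]; rfl

theorem hom_ext_word {N : Type*} [AddCommMonoid N] [Module ℚ N] {φ ψ : Bw →ₗ[ℚ] N}
    (h : ∀ u, φ (Finsupp.single u 1) = ψ (Finsupp.single u 1)) (v : Bw) : φ v = ψ v := by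
  have : φ = ψ := Finsupp.lhom_ext' fun u => LinearMap.ext_ring (h u)
  rw [this]

theorem Gm_pre (a : Bool) (v : Bw) : Gm (pre [a] v) = Lm (pre [a] v) + pre [a] (Gm v) := by
  refine hom_ext_word (φ := Gm.comp (pre [a])) (ψ := Lm.comp (pre [a]) + (pre [a]).comp Gm)
    (fun u => ?_) v
  simp [← single_cons, Gm, Lm, lin_single, Gw]

theorem Lm_ff (v : Bw) : Lm (pre [false] (pre [false] v)) = 0 :=
  hom_ext_word (φ := (Lm.comp (pre [false])).comp (pre [false])) (ψ := 0)
    (fun u => by simp [← single_cons, Lm, lin_single, Lw]) v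

theorem Lm_tf (v : Bw) : Lm (pre [true] (pre [false] v)) = 0 :=
  hom_ext_word (φ := (Lm.comp (pre [true])).comp (pre [false])) (ψ := 0)
    (fun u => by simp [← single_cons, Lm, lin_single, Lw]) v

theorem Lm_ftf (v : Bw) : Lm (pre [false] (pre [true] (pre [false] v))) = 0 :=
  hom_ext_word (φ := ((Lm.comp (pre [false])).comp (pre [true])).comp (pre [false])) (ψ := 0)
    (fun u => by simp [← single_cons, Lm, lin_single, Lw]) v

theorem Lm_ftt (v : Bw) : Lm (pre [false] (pre [true] (pre [true] v))) = - pre [true] v :=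
  hom_ext_word (φ := ((Lm.comp (pre [false])).comp (pre [true])).comp (pre [true]))
    (ψ := - pre [true])
    (fun u => by simp [← single_cons, Lm, lin_single, Lw]) v

theorem Lm_ttf (v : Bw) : Lm (pre [true] (pre [true] (pre [false] v))) = pre [true] v :=
  hom_ext_word (φ := ((Lm.comp (pre [true])).comp (pre [true])).comp (pre [false]))
    (ψ := pre [true])
    (fun u => by simp [← single_cons, Lm, lin_single, Lw]) v

theorem Sm_ff (v : Bw) : Sm (pre [false] (pre [false] v)) = 0 :=
  hom_ext_word (φ := (Sm.comp (pre [false])).comp (pre [false])) (ψ := 0)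
    (fun u => by simp [← single_cons, Sm, Sw]) v

theorem Sm_ft (v : Bw) : Sm (pre [false] (pre [true] v)) = v :=
  hom_ext_word (φ := (Sm.comp (pre [false])).comp (pre [true])) (ψ := LinearMap.id)
    (fun u => by simp [← single_cons, Sm, Sw]) v

/-- Words without the factor `yy` that are empty or end in `y`: the suffixes of the words
`z_{k₁} ⋯ z_{k_r}` with all `k_i ≥ 2`. They are closed under removing the first letter, which makes
induction on words possible. -/
inductive Ok : List Bool → Prop
  | nil : Ok []
  | one : Ok [true]
  | x {w : List Bool} : Ok w → w ≠ [] → Ok (false :: w)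
  | yx {w : List Bool} : Ok (false :: w) → Ok (true :: false :: w)

theorem Ok.tail {a : Bool} {w : List Bool} (h : Ok (a :: w)) : Ok w := by
  cases h with
  | one => exact .nil
  | x h _ => exact h
  | yx h => exact h

theorem Ok.true_cases {w : List Bool} (h : Ok (true :: w)) : w = [] ∨ ∃ u, w = false :: u := by
  cases h with
  | one => exact .inl rfl
  | yx h => exact .inr ⟨_, rfl⟩

theorem Ok.false_cases {w : List Bool} (h : Ok (false :: w)) :
    (∃ u, w = false :: u) ∨ ∃ u, w = true :: u := by
  cases h with
  | x h h0 => obtain ⟨a, u, rfl⟩ := List.exists_cons_of_ne_nil h0; cases a <;> simp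

/-- `w ⧢ y`. -/
def ins (w : List Bool) : Bw := shW w [true]

/-- `w ⧢ xy`. -/
def ins2 (w : List Bool) : Bw := shW w [false, true]

theorem ins_nil : ins [] = pre [true] (Finsupp.single [] 1) := by
  simp [ins, shW, pre_single]

theorem ins_cons (a : Bool) (w : List Bool) :
    ins (a :: w) = pre [a] (ins w) + pre [true] (pre [a] (Finsupp.single w 1)) := by
  rw [ins, shW, ← single_cons]
  simp [shW, ins, pre]

theorem ins2_nil : ins2 [] = pre [false] (pre [true] (Finsupp.single [] 1)) := by
  simp [ins2, shW, pre_single]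

theorem ins2_cons (a : Bool) (w : List Bool) :
    ins2 (a :: w) = pre [a] (ins2 w) + pre [false] (ins (a :: w)) := by
  rw [ins2, shW]
  simp [ins2, ins, pre]

/-- A word without `yy` has no factor `yyx` or `xyy`. -/
theorem Gm_Ok {w : List Bool} (h : Ok w) : Gm (Finsupp.single w 1) = 0 := by
  induction w with
  | nil => simp [Gm, lin_single, Gw]
  | cons a w ih =>
    rw [single_cons, Gm_pre, ih h.tail, map_zero, add_zero]
    cases a with
    | true =>
      rcases h.true_cases with rfl | ⟨u, rfl⟩
      · simp [Lm, pre_single, lin_single, Lw]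
      · rw [single_cons, Lm_tf]
    | false =>
      rcases h.false_cases with ⟨u, rfl⟩ | ⟨u, rfl⟩
      · rw [single_cons, Lm_ff]
      · rcases h.tail.true_cases with rfl | ⟨u, rfl⟩
        · simp [Lm, pre_single, lin_single, Lw]
        · rw [single_cons, single_cons, Lm_ftf]

/-- `G(xu ⧢ y) = −2u`, and `G(w ⧢ y) = 0` if `w` does not begin with `x`. A letter `y` inserted into
`w` creates `yy` only next to a `y` of `w`, on either side of it; the replacements
`yyx → y` and `xyy → y` then delete one letter of the following or, with a minus sign, of the
preceding run of `x`, and the sum telescopes. -/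
theorem Gm_ins {w : List Bool} (h : Ok w) :
    (∀ u, w = false :: u → Gm (ins w) = (-2 : ℚ) • Finsupp.single u 1) ∧
    ((w = [] ∨ ∃ u, w = true :: u) → Gm (ins w) = 0) := by
  induction w with
  | nil => exact ⟨by simp, fun _ => by simp [ins_nil, pre_single, Gm, lin_single, Gw, Lw]⟩
  | cons a w ih =>
    have ih := ih h.tail
    have hw0 : Gm (pre [a] (Finsupp.single w 1)) = 0 := by rw [← single_cons, Gm_Ok h]
    cases a with
    | true =>
      refine ⟨by simp, fun _ => ?_⟩
      rw [ins_cons, map_add, Gm_pre, Gm_pre _ (pre _ _), hw0]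
      rcases h.true_cases with rfl | ⟨u, rfl⟩
      · rw [ih.2 (.inl rfl)]
        simp [ins_nil, pre_single, Lm, lin_single, Lw]
      · rw [ih.1 u rfl, ins_cons, map_add, map_add, Lm_tf, single_cons, Lm_ttf, map_smul]
        simp only [pre_single, map_zero, List.singleton_append]; module
    | false =>
      refine ⟨?_, by simp⟩
      rintro _ ⟨⟩
      rw [ins_cons, map_add, Gm_pre, Gm_pre _ (pre _ _), hw0, Lm_tf]
      rcases h.false_cases with ⟨u, rfl⟩ | ⟨u, rfl⟩
      · rw [ih.1 u rfl, ins_cons, map_add, map_add, Lm_ff, Lm_ftf, map_smul, single_cons]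
        simp
      · rw [ih.2 (.inr ⟨_, rfl⟩), ins_cons, map_add, map_add, Lm_ftt, ← single_cons]
        rcases h.tail.true_cases with rfl | ⟨u, rfl⟩
        · rw [ins_nil, Lm_ftt, ← single_cons]
          simp only [map_zero]; module
        · rw [ins_cons, map_add, map_add, map_add, Lm_ftf, Lm_ftt, ← single_cons, ← single_cons]
          simp only [map_zero]; module

theorem ins2_x {w : List Bool} (h : w = [] ∨ ∃ u, w = false :: u) :
    ∃ v, ins2 w = pre [false] v := by
  rcases h with rfl | ⟨u, rfl⟩
  · exact ⟨_, ins2_nil⟩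
  · exact ⟨_, by rw [ins2_cons, ← map_add]⟩

/-- `G(w ⧢ xy) = −2 wt(w) w`: by `Gm_ins`, each letter of `w` contributes `−2w` when the `x` of `xy`
is inserted just before it. -/
theorem Gm_ins2 {w : List Bool} (h : Ok w) :
    Gm (ins2 w) = (-2 * w.length : ℚ) • Finsupp.single w 1 := by
  induction w with
  | nil => simp [ins2_nil, pre_single, Gm, lin_single, Gw, Lw]
  | cons a w ih =>
    rw [ins2_cons, map_add, Gm_pre, Gm_pre _ (ins _), ih h.tail, map_smul, ← single_cons]
    cases a with
    | true =>
      obtain ⟨v, hv⟩ := ins2_x h.true_cases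
      rw [hv, Lm_tf, (Gm_ins h).2 (.inr ⟨_, rfl⟩), ins_cons, map_add, map_add, Lm_ftt,
        ← single_cons]
      rcases h.true_cases with rfl | ⟨u, rfl⟩
      · rw [ins_nil, Lm_ftt, ← single_cons]
        simp only [map_zero, List.length_cons, List.length_nil]; push_cast; module
      · rw [ins_cons, map_add, map_add, map_add, Lm_ftf, Lm_ftt, ← single_cons, ← single_cons]
        simp only [map_zero, List.length_cons]; push_cast; module
    | false =>
      have h1 : Lm (pre [false] (ins2 w)) = 0 := by
        rcases h.false_cases with ⟨u, rfl⟩ | ⟨u, rfl⟩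
        · obtain ⟨v, hv⟩ := ins2_x (w := false :: u) (.inr ⟨_, rfl⟩)
          rw [hv, Lm_ff]
        · obtain ⟨v, hv⟩ := ins2_x h.tail.true_cases
          rw [ins2_cons, map_add, map_add, hv, Lm_ftf, Lm_ff, add_zero]
      rw [h1, (Gm_ins h).1 w rfl, ins_cons, map_add, map_add, Lm_ff, Lm_ftf, map_smul,
        ← single_cons]
      simp only [List.length_cons]; push_cast; module

/-- `S(w ⧢ xy) = w + [w = xyu] u ⧢ xy`. -/
theorem Sm_ins2 {w : List Bool} (h : w = [] ∨ ∃ u, w = false :: u) (hw : Ok w) :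
    Sm (ins2 w) = Finsupp.single w 1 + lin ins2 (Sw w) := by
  rcases h with rfl | ⟨u, rfl⟩
  · rw [ins2_nil, Sm_ft]; simp [Sw]
  · rw [ins2_cons, map_add, ins_cons, map_add, map_add, Sm_ff, Sm_ft, ← single_cons]
    rcases hw.false_cases with ⟨u, rfl⟩ | ⟨u, rfl⟩
    · rw [ins2_cons, ← map_add, Sm_ff]; simp [Sw]
    · rw [ins2_cons, map_add, map_add, Sm_ft, Sm_ff, Sw, lin_single, add_zero, zero_add, add_comm]

/-- The span of the words that end with `y`. -/
def endy1 : Submodule ℚ Bw :=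
  Submodule.span ℚ {v | ∃ b : List Bool, v = Finsupp.single (b ++ [true]) 1}

theorem pre_endy1 (a : Bool) {v : Bw} (hv : v ∈ endy1) : pre [a] v ∈ endy1 := by
  suffices endy1 ≤ endy1.comap (pre [a]) from this hv
  refine Submodule.span_le.2 ?_
  rintro _ ⟨b, rfl⟩
  exact Submodule.subset_span ⟨a :: b, by rw [pre_single]; rfl⟩

theorem pre_adm {v : Bw} (hv : v ∈ endy1) : pre [false] v ∈ adm := by
  suffices endy1 ≤ adm.comap (pre [false]) from this hv
  refine Submodule.span_le.2 ?_
  rintro _ ⟨b, rfl⟩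
  exact Submodule.subset_span ⟨b, by rw [pre_single]; rfl⟩

theorem ok_end {w : List Bool} (h : Ok w) (h0 : w ≠ []) : ∃ b, w = b ++ [true] := by
  induction w with
  | nil => simp at h0
  | cons a w ih =>
    rcases eq_or_ne w [] with rfl | hw
    · cases h with
      | one => exact ⟨[], rfl⟩
      | x _ h => simp at h
    · obtain ⟨b, rfl⟩ := ih h.tail hw
      exact ⟨a :: b, rfl⟩

theorem ins_end {w : List Bool} (h : Ok w) : ins w ∈ endy1 := by
  induction w with
  | nil => rw [ins_nil, ← single_cons]; exact Submodule.subset_span ⟨[], rfl⟩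
  | cons a w ih =>
    rw [ins_cons, ← single_cons]
    refine add_mem (pre_endy1 _ (ih h.tail)) (pre_endy1 _ ?_)
    obtain ⟨b, hb⟩ := ok_end h (by simp)
    exact Submodule.subset_span ⟨b, by rw [hb]⟩

theorem ins2_end {w : List Bool} (h : Ok w) : ins2 w ∈ endy1 := by
  induction w with
  | nil => rw [ins2_nil, ← single_cons, ← single_cons]; exact Submodule.subset_span ⟨[false], rfl⟩
  | cons a w ih =>
    rw [ins2_cons]
    exact add_mem (pre_endy1 _ (ih h.tail)) (pre_endy1 _ (ins_end h))

theorem ins2_adm {w : List Bool} (h : w = [] ∨ ∃ u, w = false :: u) (hw : Ok w) :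
    ins2 w ∈ adm := by
  rcases h with rfl | ⟨u, rfl⟩
  · rw [ins2_nil, ← single_cons]
    exact pre_adm (Submodule.subset_span ⟨[], rfl⟩)
  · rw [ins2_cons]
    exact add_mem (pre_adm (ins2_end hw.tail)) (pre_adm (ins_end hw))

theorem Ok_rep {w : List Bool} (h : Ok w) (h0 : w ≠ []) : ∀ n, Ok (List.replicate n false ++ w)
  | 0 => h
  | n + 1 => by
    rw [List.replicate_succ]
    exact .x (Ok_rep h h0 n) (by simp [h0])

theorem Ok_toXY : ∀ l : List ℕ, (∀ k ∈ l, 2 ≤ k) →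
    (toXY l = [] ∨ ∃ u, toXY l = false :: u) ∧ Ok (toXY l)
  | [], _ => ⟨.inl rfl, .nil⟩
  | k :: l, h => by
    obtain ⟨j, rfl⟩ : ∃ j, k = j + 2 := ⟨k - 2, by have := h k (by simp); omega⟩
    have ih := Ok_toXY l fun i hi => h i (by simp [hi])
    rw [toXY_cons, show j + 2 - 1 = j + 1 by omega]
    refine ⟨.inr ⟨_, by rw [List.replicate_succ]; rfl⟩, Ok_rep ?_ (by simp) _⟩
    rcases ih.1 with h | ⟨u, h⟩
    · rw [h]; exact .one
    · rw [h] at ih ⊢; exact .yx ih.2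

/-! ### Passing between z-words and xy-words -/

theorem fromXYAux_rep (n c : ℕ) (w : List Bool) :
    fromXYAux (List.replicate n false ++ true :: w) c = (n + c + 1) :: fromXYAux w 0 := by
  induction n generalizing c with
  | zero => simp [fromXYAux]
  | succ n ih => rw [List.replicate_succ, List.cons_append, fromXYAux, ih]; congr 1; omega

theorem fromXY_toXY : ∀ l : List ℕ, (∀ k ∈ l, 1 ≤ k) → fromXY (toXY l) = l
  | [], _ => rfl
  | k :: l, h => by
    have hk := h k (by simp)
    rw [toXY_cons, fromXY, fromXYAux_rep, ← fromXY, fromXY_toXY l fun i hi => h i (by simp [hi])]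
    congr 1; omega

theorem toXY_fromXYAux : ∀ (b : List Bool) (c : ℕ),
    toXY (fromXYAux (b ++ [true]) c) = List.replicate c false ++ (b ++ [true])
  | [], c => by simp [fromXYAux, toXY_cons, toXY_nil]
  | false :: b, c => by
    rw [List.cons_append, fromXYAux, toXY_fromXYAux b (c + 1), List.replicate_succ']
    simp
  | true :: b, c => by
    rw [List.cons_append, fromXYAux, toXY_cons, toXY_fromXYAux b 0]
    simp

theorem toXY_fromXY (b : List Bool) : toXY (fromXY (b ++ [true])) = b ++ [true] :=
  toXY_fromXYAux b 0

theorem length_toXY : ∀ l : List ℕ, (∀ k ∈ l, 1 ≤ k) → (toXY l).length = l.sum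
  | [], _ => rfl
  | k :: l, h => by
    have hk := h k (by simp)
    rw [toXY_cons, List.length_append, List.length_cons, length_toXY l fun i hi => h i (by simp [hi])]
    simp; omega

/-- The linear extension of `fromXY`. -/
def fX : Bw →ₗ[ℚ] H := Finsupp.lmapDomain ℚ ℚ fromXY

theorem fX_single (b : List Bool) (q : ℚ) : fX (Finsupp.single b q) = Finsupp.single (fromXY b) q := by
  simp [fX]

/-- The subspace `𝔥^{≥2}` of `𝔥¹`. -/
def H2 : Submodule ℚ H := Submodule.span ℚ {v | ∃ l : List ℕ, (∀ k ∈ l, 2 ≤ k) ∧ v = zw l}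

theorem fX_good {v : Bw} (hv : v ∈ good0) : fX v ∈ H2 := by
  suffices good0 ≤ H2.comap fX from this hv
  refine Submodule.span_le.2 ?_
  rintro _ ⟨l, hl, rfl⟩
  refine Submodule.subset_span ⟨l, hl, ?_⟩
  rw [fX_single, fromXY_toXY l fun k hk => by have := hl k hk; omega]; rfl

/-- `𝒟` as a linear map. -/
def Dl : H →ₗ[ℚ] H := Finsupp.linearCombination ℚ Drop1W

theorem Drop1_eq (w : H) : Drop1 w = Dl w := by
  simp [Drop1, Dl, Finsupp.linearCombination_apply]

theorem Drop1W_eq (l : List ℕ) : Drop1W l = fX (DropD (rle (toXY l))) := rfl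

theorem Dl_zw (l : List ℕ) : Dl (zw l) = Drop1W l := by simp [Dl, zw]

theorem Dl_H2 (v : H) : Dl v ∈ H2 := by
  induction v using Finsupp.induction_linear with
  | zero => simp
  | add f g hf hg => rw [map_add]; exact add_mem hf hg
  | single a c =>
    rw [Dl, Finsupp.linearCombination_single, Drop1W_eq]
    exact H2.smul_mem _ (fX_good (DropD_good0 _))

theorem toXY_dec : ∀ as : List ℕ, toXY (as.map (· + 1)) = dec false (run as)
  | [] => rfl
  | a :: as => by
    rw [List.map_cons, toXY_cons, toXY_dec as]
    simp [run, dec]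

theorem pos_run : ∀ as : List ℕ, (∀ k ∈ as, 1 ≤ k) → ∀ k ∈ run as, 1 ≤ k
  | [], _ => by simp [run]
  | a :: as, h => by
    simp only [List.forall_mem_cons] at h
    simp only [run, List.forall_mem_cons]
    exact ⟨h.1, le_rfl, pos_run as h.2⟩

/-- `𝒟` is the identity on `𝔥^{≥2}`. -/
theorem Drop1W_self (l : List ℕ) (h : ∀ k ∈ l, 2 ≤ k) : Drop1W l = zw l := by
  obtain ⟨as, has, rfl⟩ : ∃ as : List ℕ, (∀ k ∈ as, 1 ≤ k) ∧ l = as.map (· + 1) := by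
    refine ⟨l.map (· - 1), ?_, ?_⟩
    · intro k hk
      obtain ⟨j, hj, rfl⟩ := List.mem_map.1 hk
      have := h j hj
      change 1 ≤ j - 1
      omega
    · rw [List.map_map]
      conv_lhs => rw [← List.map_id l]
      refine List.map_congr_left fun k hk => ?_
      have := h k hk
      change k = k - 1 + 1
      omega
  rw [Drop1W_eq, toXY_dec, rle_dec _ _ (pos_run as has), DropD_run _ as le_rfl has, wd, fX_single,
    fromXY_toXY]
  · rfl
  · intro k hk; have := h k hk; omega

theorem Dl_self {v : H} (hv : v ∈ H2) : Dl v = v := by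
  have h : H2 ≤ LinearMap.eqLocus Dl LinearMap.id := by
    refine Submodule.span_le.2 ?_
    rintro _ ⟨l, hl, rfl⟩
    simp only [SetLike.mem_coe, LinearMap.mem_eqLocus, LinearMap.id_apply]
    rw [Dl_zw, Drop1W_self l hl]
  exact h hv

theorem Dl_fX {v : Bw} (hv : v ∈ adm) : Dl (fX v) = fX (Dm v) := by
  have h : adm ≤ LinearMap.eqLocus (Dl.comp fX) (fX.comp Dm) := by
    refine Submodule.span_le.2 ?_
    rintro _ ⟨b, rfl⟩
    simp only [SetLike.mem_coe, LinearMap.mem_eqLocus, LinearMap.comp_apply]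
    have := toXY_fromXY (false :: b)
    rw [List.cons_append] at this
    rw [fX_single, ← zw, Dl_zw, Drop1W_eq, this, Dm, lin_single]
  exact h hv

/-- The operator `S` in terms of subscripts: strip a leading `z₂`, and kill words without one. -/
def Tw : List ℕ → H
  | 2 :: l => zw l
  | _ => 0

/-- The operator stripping a leading `z₂`. -/
def Tm : H →ₗ[ℚ] H := Finsupp.linearCombination ℚ Tw

theorem Tm_zw (l : List ℕ) : Tm (zw l) = Tw l := by simp [Tm, zw]

/-- A word beginning with `x²` does not begin with `z₂`. -/
theorem fromXYAux_gt : ∀ (b : List Bool) (c : ℕ), 2 ≤ c → Tw (fromXYAux b c) = 0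
  | [], _, _ => rfl
  | false :: b, c, h => by rw [fromXYAux]; exact fromXYAux_gt b (c + 1) (by omega)
  | true :: b, c, h => by
    obtain ⟨j, rfl⟩ : ∃ j, c = j + 2 := ⟨c - 2, by omega⟩
    rfl

theorem Tm_fX (v : Bw) : Tm (fX v) = fX (Sm v) := by
  refine hom_ext_word (φ := Tm.comp fX) (ψ := fX.comp Sm) (fun u => ?_) v
  simp only [LinearMap.comp_apply]
  rw [fX_single, ← zw, Tm_zw, Sm_single, one_smul]
  rcases u with _ | ⟨_ | _, _ | ⟨_ | _, u⟩⟩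
  · simp [fromXY, fromXYAux, Tw, Sw]
  · simp [fromXY, fromXYAux, Tw, Sw]
  · rw [fromXY, fromXYAux, fromXYAux, fromXYAux_gt _ _ (by omega)]; simp [Sw]
  · simp [fromXY, fromXYAux, Tw, Sw, fX_single, zw]
  · simp [fromXY, fromXYAux, Tw, Sw]
  · simp [fromXY, fromXYAux, Tw, Sw]
  · simp [fromXY, fromXYAux, Tw, Sw]

/-! ### The harmonic product with z₂ -/

theorem hmulW_nil : hmulW [] [2] = zw [2] := by simp [hmulW, zw]

theorem hmulW_cons (k : ℕ) (l : List ℕ) : hmulW (k :: l) [2] =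
    Finsupp.lmapDomain ℚ ℚ (k :: ·) (hmulW l [2]) + zw (2 :: k :: l) + zw ((k + 2) :: l) := by
  rw [hmulW]
  have h : hmulW l [] = Finsupp.single l 1 := by cases l <;> simp [hmulW]
  simp [hmulW, h, zw]

theorem hmulW_H2 : ∀ l : List ℕ, (∀ k ∈ l, 2 ≤ k) → hmulW l [2] ∈ H2
  | [], _ => by rw [hmulW_nil]; exact Submodule.subset_span ⟨[2], by simp, rfl⟩
  | k :: l, h => by
    have h' := h
    simp only [List.forall_mem_cons] at h'
    rw [hmulW_cons]
    refine add_mem (add_mem ?_ ?_) ?_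
    · have : H2 ≤ H2.comap (Finsupp.lmapDomain ℚ ℚ (k :: ·)) := by
        refine Submodule.span_le.2 ?_
        rintro _ ⟨t, ht, rfl⟩
        refine Submodule.subset_span ⟨k :: t, ?_, by simp [zw]⟩
        simp only [List.forall_mem_cons]; exact ⟨h'.1, ht⟩
      exact this (hmulW_H2 l h'.2)
    · exact Submodule.subset_span ⟨_, by simpa using h, rfl⟩
    · refine Submodule.subset_span ⟨_, ?_, rfl⟩
      simp only [List.forall_mem_cons]; exact ⟨by omega, h'.2⟩

theorem Tm_cons (k : ℕ) (v : H) :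
    Tm (Finsupp.lmapDomain ℚ ℚ (k :: ·) v) = if k = 2 then v else 0 := by
  induction v using Finsupp.induction_linear with
  | zero => simp
  | add f g hf hg => rw [map_add, map_add, hf, hg]; split_ifs <;> simp
  | single a c =>
    split_ifs with h
    · subst h; simp [Tm, Tw, zw]
    · have : Tw (k :: a) = 0 := by
        unfold Tw; split
        · rename_i h'; simp at h'; omega
        · rfl
      simp [Tm, this]

/-- `T(l * z₂) = l + [l = z₂ l'] l' * z₂`. -/
theorem Tm_hmulW (l : List ℕ) (h : ∀ k ∈ l, 2 ≤ k) :
    Tm (hmulW l [2]) = zw l + Finsupp.linearCombination ℚ (fun u => hmulW u [2]) (Tw l) := by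
  rcases l with _ | ⟨k, l⟩
  · rw [hmulW_nil, Tm_zw]; simp [Tw]
  · have hk := h k (by simp)
    rw [hmulW_cons, map_add, map_add, Tm_cons, Tm_zw, Tm_zw]
    have h2 : Tw ((k + 2) :: l) = 0 := by
      obtain ⟨j, rfl⟩ : ∃ j, k = j + 1 := ⟨k - 1, by omega⟩
      rfl
    rw [h2, add_zero, show Tw (2 :: k :: l) = zw (k :: l) from rfl, add_comm]
    congr 1
    split_ifs with hk2
    · subst hk2; simp [Tw, zw]
    · have : Tw (k :: l) = 0 := by
        unfold Tw; split
        · rename_i h'; simp at h'; omega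
        · rfl
      simp [this]

/-! ### The operator der -/

/-- `der` on words. -/
def dW (l : List ℕ) : H := Dl (shmulW l [2] - hmulW l [2])

/-- `der` as a linear map. -/
def dl : H →ₗ[ℚ] H := Finsupp.linearCombination ℚ dW

theorem hmul_z2 (w : H) : hmul w (zw [2]) = Finsupp.linearCombination ℚ (fun l => hmulW l [2]) w := by
  simp [hmul, zw, Finsupp.linearCombination_apply]

theorem shmul_z2 (w : H) :
    shmul w (zw [2]) = Finsupp.linearCombination ℚ (fun l => shmulW l [2]) w := by
  simp [shmul, zw, Finsupp.linearCombination_apply]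

theorem der_eq (w : H) : der w = dl w := by
  rw [der, hmul_z2, shmul_z2, Drop1_eq]
  induction w using Finsupp.induction_linear with
  | zero => simp
  | add f g hf hg =>
    rw [map_add dl, ← hf, ← hg]; simp only [map_add, map_sub]; abel
  | single l c => simp [dl, dW, ← smul_sub]

theorem toXY_two : toXY [2] = [false, true] := rfl

theorem shmulW_two (l : List ℕ) : shmulW l [2] = fX (ins2 (toXY l)) := by
  rw [shmulW, toXY_two]; rfl

theorem Tw_eq_Sw (l : List ℕ) (h : ∀ k ∈ l, 2 ≤ k) :
    Sw (toXY l) = 0 ∧ Tw l = 0 ∨ ∃ l', l = 2 :: l' ∧ Sw (toXY l) = Finsupp.single (toXY l') 1 := by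
  rcases l with _ | ⟨k, l⟩
  · left; simp [toXY_nil, Sw, Tw]
  · obtain ⟨j, rfl⟩ : ∃ j, k = j + 2 := ⟨k - 2, by have := h k (by simp); omega⟩
    rw [toXY_cons, show j + 2 - 1 = j + 1 by omega]
    rcases j with _ | j
    · right; exact ⟨l, rfl, by simp [Sw]⟩
    · left; exact ⟨by simp [Sw, List.replicate_succ], rfl⟩

/-- `T(der l) = -2 wt(l) l + [l = z₂ l'] der l'`. -/
theorem Tm_dW (l : List ℕ) (h : ∀ k ∈ l, 2 ≤ k) :
    Tm (dW l) = (-2 * l.sum : ℚ) • zw l + dl (Tw l) := by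
  have h1 : ∀ k ∈ l, 1 ≤ k := fun k hk => (by omega : 1 ≤ 2).trans (h k hk)
  obtain ⟨hx, hok⟩ := Ok_toXY l h
  have had := ins2_adm hx hok
  have hD : fX (Dm (Finsupp.single (toXY l) 1)) = zw l := by
    rw [Dm, lin_single, ← Drop1W_eq, Drop1W_self l h]
  rw [dW, map_sub, Dl_self (hmulW_H2 l h), map_sub, Tm_hmulW l h, shmulW_two, Dl_fX had, Tm_fX,
    Sm_Dm had, Gm_ins2 hok, Sm_ins2 hx hok, length_toXY l h1, map_smul, map_add, map_add,
    map_smul, map_add, hD]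
  rcases Tw_eq_Sw l h with ⟨e1, e2⟩ | ⟨l', rfl, e1⟩
  · rw [e1, e2]; simp
  · have h' : ∀ k ∈ l', 2 ≤ k := fun k hk => h k (by simp [hk])
    obtain ⟨hx', hok'⟩ := Ok_toXY l' h'
    rw [e1, lin_single, ← Dl_fX (ins2_adm hx' hok'), ← shmulW_two]
    have : dl (Tw (2 :: l')) = Dl (shmulW l' [2]) - hmulW l' [2] := by
      simp [Tw, zw, dl, dW, Dl_self (hmulW_H2 l' h')]
    rw [this]
    simp only [Tw, zw, Finsupp.linearCombination_single, one_smul]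
    abel

/-! ### δ on 𝔥^{≥2} -/

/-- Words without `yy` have no factor `yyx` or `xyy`. -/
theorem replaceOcc_Ok {w : List Bool} (h : Ok w) :
    replaceOcc [true, true, false] w = 0 ∧ replaceOcc [false, true, true] w = 0 := by
  induction w with
  | nil => simp [replaceOcc]
  | cons a w ih =>
    obtain ⟨i1, i2⟩ := ih h.tail
    rw [replaceOcc, replaceOcc, i1, i2]
    cases a with
    | true => rcases h.true_cases with rfl | ⟨u, rfl⟩ <;> simp [List.isPrefixOf]
    | false =>
      rcases h.false_cases with ⟨u, rfl⟩ | ⟨u, rfl⟩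
      · simp [List.isPrefixOf]
      · rcases h.tail.true_cases with rfl | ⟨u, rfl⟩ <;> simp [List.isPrefixOf]

/-- `δ = −½ S` on words that have no factor `yy` and do not begin with `y`. -/
theorem deltaB_Ok {w : List Bool} (h : w = [] ∨ ∃ u, w = false :: u) (hw : Ok w) :
    deltaB w = (-1 / 2 : ℚ) • Sw w := by
  obtain ⟨h1, h2⟩ := replaceOcc_Ok hw
  rw [deltaB, h1, h2]
  rcases h with rfl | ⟨u, rfl⟩
  · simp [Sw]
  · rcases hw.false_cases with ⟨u, rfl⟩ | ⟨u, rfl⟩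
    · simp [Sw]
    · simp [Sw]; norm_num

/-- `δ` as a linear map. -/
def del : H →ₗ[ℚ] H := Finsupp.linearCombination ℚ fun a => fX (deltaB (toXY a))

theorem deltaH_eq (w : H) : deltaH w = del w := by
  simp [deltaH, del, Finsupp.linearCombination_apply, fX]

/-- `δ = −½ T` on `𝔥^{≥2}`, where `T` strips a leading `z₂`. -/
theorem del_H2 {v : H} (hv : v ∈ H2) : del v = (-1 / 2 : ℚ) • Tm v := by
  have h : H2 ≤ LinearMap.eqLocus del ((-1 / 2 : ℚ) • Tm) := by
    refine Submodule.span_le.2 ?_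
    rintro _ ⟨l, hl, rfl⟩
    simp only [SetLike.mem_coe, LinearMap.mem_eqLocus, LinearMap.smul_apply]
    obtain ⟨hx, hok⟩ := Ok_toXY l hl
    have h1 : ∀ k ∈ l, 1 ≤ k := fun k hk => (by omega : 1 ≤ 2).trans (hl k hk)
    have := Tm_fX (Finsupp.single (toXY l) 1)
    rw [fX_single, fromXY_toXY l h1, Sm_single, one_smul] at this
    rw [zw, this, del, Finsupp.linearCombination_single, one_smul, deltaB_Ok hx hok, map_smul]
  exact h hv

/-- The weight operator as a linear map. -/
def Wl : H →ₗ[ℚ] H := Finsupp.linearCombination ℚ fun a => (a.sum : ℚ) • zw a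

theorem Wop_eq (w : H) : Wop w = Wl w := by
  simp [Wop, Wl, Finsupp.linearCombination_apply, zw]

/-- On a word `l`, with `T` stripping a leading `z₂`, `δ(der l) = −½ T(der l) = wt(l) l − ½ der(T
l)` and `der(δ l) = −½ der(T l)`. -/
theorem main_word (l : List ℕ) (h : ∀ k ∈ l, 2 ≤ k) :
    del (dl (zw l)) - dl (del (zw l)) = Wl (zw l) := by
  have e : dl (zw l) = dW l := by simp [dl, zw]
  rw [e, dW, del_H2 (Dl_H2 _), ← dW, Tm_dW l h, del_H2 (Submodule.subset_span ⟨l, h, rfl⟩), Tm_zw,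
    map_smul]
  have e' : Wl (zw l) = (l.sum : ℚ) • zw l := by simp [Wl, zw]
  rw [e']
  module

theorem isH2_mem {w : H} (hw : isH2 w) : w ∈ H2 := by
  rw [← Finsupp.sum_single w]
  refine Submodule.sum_mem _ fun l hl => ?_
  have : Finsupp.single l (w l) = w l • zw l := by simp [zw]
  rw [this]
  exact H2.smul_mem _ (Submodule.subset_span ⟨l, hw l hl, rfl⟩)

/-- `[δ, der] = W` on `𝔥^{≥2}`. -/
theorem stmt11 (w : H) (hw : isH2 w) : deltaH (der w) - der (deltaH w) = Wop w := by
  rw [deltaH_eq, deltaH_eq, der_eq, der_eq, Wop_eq]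
  have h : H2 ≤ LinearMap.eqLocus (del.comp dl - dl.comp del) Wl := by
    refine Submodule.span_le.2 ?_
    rintro _ ⟨l, hl, rfl⟩
    exact main_word l hl
  exact h (isH2_mem hw)
end
end

section
/- Let R be a commutative ℚ-algebra and, for each integer m > 0, let f(m) : 𝔥¹_* → R be a ℚ-algebra homomorphism with respect to the harmonic product, written f_w(m) := f(m)(w). Fix an integer M > 0. Define F(M) : 𝔥¹ → R ℚ-linearly by F_1(M) := 1 and F_w(M) := Σ_{w = w₁⋯w_s} Σ_{M > m₁ > ⋯ > m_s > 0} f_{w₁}(m₁)⋯f_{w_s}(m_s) for nonempty words w (sum over all decompositions of w as a concatenation of nonempty words). Define coF(M) : 𝔥¹ → R ℚ-linearly by coF(M)(1) := 1, coF(M)(z₁^r) := (−1)^r Σ_{M > m₁ ≥ ⋯ ≥ m_r > 0} μ^{m₁,…,m_r} f_{z₁}(m₁)⋯f_{z₁}(m_r), where μ^{m₁,…,m_r} := 1/(r₁!⋯r_s!) when the non-increasing sequence (m₁,…,m_r) consists of s distinct values with multiplicities r₁, …, r_s, and coF(M)(w) := 0 for words containing a letter z_k with k ≥ 2. Define F^*(M)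 : 𝔥¹ → R by F^*(M)(z_{k₁}⋯z_{k_r}) := Σ_{i=0}^{r} coF(M)(z_{k₁}⋯z_{k_i})·F(M)(z_{k_{i+1}}⋯z_{k_r}) (the deconcatenation convolution of coF(M) and F(M)). Then F^*(M) is a ℚ-algebra homomorphism 𝔥¹_* → R, i.e. F^*(M)(u*v) = F^*(M)(u)·F^*(M)(v) for all u, v ∈ 𝔥¹. -/
/-!
The harmonic product makes `𝔥¹` a bialgebra for the deconcatenation coproduct
(`linExt_decSum_hmulW`, stated after applying an arbitrary function of two words), so the
deconcatenation convolution of two multiplicative functionals is multiplicative (`IsHom.conv`).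
It remains to see that `coF(M)` and `F(M)` are multiplicative.

* By the multinomial theorem (`sum_antitone_muCoeff`), `coF(M)(z₁^r) = (-A)^r / r!` with
  `A = Σ_{0 < m < M} f_{z₁}(m)`. All letters of `𝔥¹` being `z_k` with `k ≥ 1`, a product of two
  words has a word without letters `z_k`, `k ≥ 2`, only if both factors are powers of `z₁`, and
  `z₁^r * z₁^s` is `binom(r+s, r) z₁^{r+s}` up to words killed by `coF(M)`
  (`linExt_ones_hmulW`). So multiplicativity is the identity
  `binom(r+s, r) / (r+s)! = 1 / (r! s!)` (`isHom_coFword`).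
* Separating the index sequences which start with `M` gives `F(M+1) = f(M) ⋆ F(M)` for the
  convolution `⋆` (`Fword_succ`), and `F(1)` is the counit. By induction `F(M)` is
  multiplicative (`isHom_Fword`).
-/


open scoped Classical BigOperators

noncomputable section

/-! ### The harmonic product and deconcatenation -/

section Convolution

variable {R : Type*} [CommRing R]

/-- The sum of `B p q` over all deconcatenations `l = p ++ q`. -/
def decSum : (List ℕ → List ℕ → R) → List ℕ → R
  | B, [] => B [] []
  | B, k :: u => B [] (k :: u) + decSum (fun p q => B (k :: p) q) u

lemma decSum_eq_sum (B : List ℕ → List ℕ → R) (l : List ℕ) :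
    decSum B l = ∑ i ∈ Finset.range (l.length + 1), B (l.take i) (l.drop i) := by
  induction l generalizing B with
  | nil => simp [decSum]
  | cons k u ih =>
    rw [decSum, ih, List.length_cons, Finset.sum_range_succ' _ (u.length + 1), add_comm]
    simp

lemma decSum_add (B C : List ℕ → List ℕ → R) (l : List ℕ) :
    decSum (fun p q => B p q + C p q) l = decSum B l + decSum C l := by
  simp only [decSum_eq_sum, Finset.sum_add_distrib]

lemma decSum_mul_const (B : List ℕ → List ℕ → R) (r : R) (l : List ℕ) :
    decSum (fun p q => B p q * r) l = decSum B l * r := by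
  simp only [decSum_eq_sum, Finset.sum_mul]

lemma decSum_const_mul (B : List ℕ → List ℕ → R) (r : R) (l : List ℕ) :
    decSum (fun p q => r * B p q) l = r * decSum B l := by
  simp only [decSum_eq_sum, Finset.mul_sum]

lemma decSum_congr {B C : List ℕ → List ℕ → R} {l : List ℕ}
    (h : ∀ p q, p ++ q = l → B p q = C p q) : decSum B l = decSum C l := by
  simp only [decSum_eq_sum]
  exact Finset.sum_congr rfl fun i _ => h _ _ (List.take_append_drop i l)

variable [Algebra ℚ R]

/-- The ℚ-linear extension to `H` of a function on words. -/
def linExt (φ : List ℕ → R) : H →ₗ[ℚ] R := Finsupp.linearCombination ℚ φ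

lemma linExt_single (φ : List ℕ → R) (l : List ℕ) : linExt φ (Finsupp.single l 1) = φ l := by
  simp [linExt]

lemma linExt_mapDomain (φ : List ℕ → R) (g : List ℕ → List ℕ) (x : H) :
    linExt φ (Finsupp.mapDomain g x) = linExt (fun w => φ (g w)) x := by
  simp only [linExt, Finsupp.linearCombination_mapDomain]
  rfl

lemma linExt_add_fun (φ ψ : List ℕ → R) (x : H) :
    linExt (fun w => φ w + ψ w) x = linExt φ x + linExt ψ x := by
  simp [linExt, Finsupp.linearCombination_apply, Finsupp.sum, Finset.sum_add_distrib]

lemma linExt_zero_fun (x : H) : linExt (fun _ => (0 : R)) x = 0 := by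
  simp [linExt, Finsupp.linearCombination_apply]

lemma linExt_mul_const (φ : List ℕ → R) (r : R) (x : H) :
    linExt (fun w => φ w * r) x = linExt φ x * r := by
  simp [linExt, Finsupp.linearCombination_apply, Finsupp.sum, Finset.sum_mul]

lemma linExt_const_mul (φ : List ℕ → R) (r : R) (x : H) :
    linExt (fun w => r * φ w) x = r * linExt φ x := by
  simp [linExt, Finsupp.linearCombination_apply, Finsupp.sum, Finset.mul_sum]

/-- The bilinear extension of a function `B` of two words. -/
def linExt₂ (B : List ℕ → List ℕ → R) (x y : H) : R := linExt (fun p => linExt (B p) y) x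

/-- The deconcatenation coproduct is multiplicative for the harmonic product, stated after
applying an arbitrary function `B` of two words. -/
lemma linExt_decSum_hmulW (B : List ℕ → List ℕ → R) (a b : List ℕ) :
    linExt (decSum B) (hmulW a b) =
      decSum (fun a' a'' => decSum (fun b' b'' =>
        linExt₂ B (hmulW a' b') (hmulW a'' b'')) b) a := by
  have nilR : ∀ w : List ℕ, hmulW w [] = Finsupp.single w 1 := by
    intro w; cases w <;> simp [hmulW]
  have nilL : ∀ w : List ℕ, hmulW [] w = Finsupp.single w 1 := by
    intro w; simp [hmulW]
  match a, b with
  | [], b => simp [nilL, linExt_single, linExt₂, decSum]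
  | k :: u, [] =>
    simp [nilR, linExt_single, linExt₂, decSum]
  | k :: u, l :: v =>
    have h1 := linExt_decSum_hmulW (fun p q => B (k :: p) q) u (l :: v)
    have h2 := linExt_decSum_hmulW (fun p q => B (l :: p) q) (k :: u) v
    have h3 := linExt_decSum_hmulW (fun p q => B ((k + l) :: p) q) u v
    have e0 : linExt (B []) (hmulW (k :: u) (l :: v)) =
        linExt (fun w => B [] (k :: w)) (hmulW u (l :: v)) +
        linExt (fun w => B [] (l :: w)) (hmulW (k :: u) v) +
        linExt (fun w => B [] ((k + l) :: w)) (hmulW u v) := by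
      rw [hmulW]; simp only [map_add, linExt_mapDomain]
    have e1 : ∀ a' b' : List ℕ, ∀ y : H, linExt₂ B (hmulW (k :: a') (l :: b')) y =
        linExt₂ (fun p q => B (k :: p) q) (hmulW a' (l :: b')) y +
        linExt₂ (fun p q => B (l :: p) q) (hmulW (k :: a') b') y +
        linExt₂ (fun p q => B ((k + l) :: p) q) (hmulW a' b') y := by
      intro a' b' y
      rw [hmulW]; simp only [linExt₂, map_add, linExt_mapDomain]
    have lhs : linExt (decSum B) (hmulW (k :: u) (l :: v)) =
        linExt (B []) (hmulW (k :: u) (l :: v)) +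
        linExt (decSum (fun p q => B (k :: p) q)) (hmulW u (l :: v)) +
        linExt (decSum (fun p q => B (l :: p) q)) (hmulW (k :: u) v) +
        linExt (decSum (fun p q => B ((k + l) :: p) q)) (hmulW u v) := by
      rw [e0]
      conv_lhs => rw [hmulW]
      simp only [map_add, linExt_mapDomain, decSum, linExt_add_fun]
      ring
    rw [lhs, h1, h2, h3]
    simp only [decSum, decSum_add, e1, nilL, nilR]
    simp only [linExt₂, linExt_single]
    ring
  termination_by a.length + b.length

/-- A function on words whose linear extension is multiplicative for the harmonic product
on words in the letters `z_k`, `k ≥ 1`. -/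
def IsHom (φ : List ℕ → R) : Prop :=
  ∀ a b : List ℕ, (∀ k ∈ a, 1 ≤ k) → (∀ k ∈ b, 1 ≤ k) → linExt φ (hmulW a b) = φ a * φ b

/-- The deconcatenation convolution of two multiplicative functions is multiplicative. -/
lemma IsHom.conv {φ ψ : List ℕ → R} (hφ : IsHom φ) (hψ : IsHom ψ) :
    IsHom (decSum fun p q => φ p * ψ q) := by
  intro a b ha hb
  rw [linExt_decSum_hmulW, ← decSum_mul_const]
  refine decSum_congr fun a' a'' haa => ?_
  rw [← decSum_const_mul]
  refine decSum_congr fun b' b'' hbb => ?_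
  subst haa hbb
  simp only [List.mem_append] at ha hb
  simp only [linExt₂, linExt_const_mul, linExt_mul_const]
  rw [hφ a' b' (fun k h => ha k (.inl h)) (fun k h => hb k (.inl h)),
    hψ a'' b'' (fun k h => ha k (.inr h)) (fun k h => hb k (.inr h))]
  ring

/-- The value on `a * b` of a functional supported on the powers of `z₁`: modulo words with a
letter `z_k`, `k ≥ 2`, the product of `z₁^r` and `z₁^s` is `binom(r+s, r) z₁^{r+s}`. -/
lemma linExt_ones_hmulW (e : ℕ → R) (a b : List ℕ) (ha : ∀ k ∈ a, 1 ≤ k) (hb : ∀ k ∈ b, 1 ≤ k) :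
    linExt (fun l => if ∀ k ∈ l, k = 1 then e l.length else 0) (hmulW a b) =
      if (∀ k ∈ a, k = 1) ∧ (∀ k ∈ b, k = 1) then
        ((a.length + b.length).choose a.length : R) * e (a.length + b.length) else 0 := by
  match a, b with
  | [], b => simp [hmulW, linExt_single]
  | k :: u, [] => simp [hmulW, linExt_single]
  | k :: u, l :: v =>
    have hk : 1 ≤ k := ha k (by simp)
    have hl : 1 ≤ l := hb l (by simp)
    have hu : ∀ k ∈ u, 1 ≤ k := fun j hj => ha j (by simp [hj])
    have hv : ∀ k ∈ v, 1 ≤ k := fun j hj => hb j (by simp [hj])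
    have h1 := linExt_ones_hmulW (fun n => e (n + 1)) u (l :: v) hu hb
    have h2 := linExt_ones_hmulW (fun n => e (n + 1)) (k :: u) v ha hv
    have hcons : ∀ j : ℕ, (fun w : List ℕ =>
        if ∀ i ∈ j :: w, i = 1 then e (j :: w).length else 0) =
        if j = 1 then (fun w => if ∀ i ∈ w, i = 1 then e (w.length + 1) else 0)
        else fun _ => 0 := by
      intro j
      by_cases hj : j = 1 <;> simp [hj]
    rw [hmulW]
    simp only [map_add, linExt_mapDomain]
    rw [hcons k, hcons l, hcons (k + l), if_neg (by omega : ¬ k + l = 1), linExt_zero_fun, add_zero]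
    by_cases hk1 : k = 1
    · by_cases hl1 : l = 1
      · subst hk1 hl1
        rw [if_pos rfl, h1, h2]
        by_cases huv : (∀ i ∈ u, i = 1) ∧ (∀ i ∈ v, i = 1)
        · have : u.length + 1 + (v.length + 1) = (u.length + (v.length + 1)) + 1 := by ring
          rw [if_pos ⟨huv.1, by simpa using huv.2⟩, if_pos ⟨by simpa using huv.1, huv.2⟩,
            if_pos ⟨by simpa using huv.1, by simpa using huv.2⟩]
          simp only [List.length_cons]
          rw [this, Nat.choose_succ_succ, show u.length + 1 + v.length =
            u.length + (v.length + 1) by ring, Nat.succ_eq_add_one]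
          push_cast
          ring_nf
        · simp [huv]
      · subst hk1
        rw [if_pos rfl, if_neg hl1, h1, linExt_zero_fun]
        simp [hl1]
    · by_cases hl1 : l = 1
      · subst hl1
        rw [if_pos rfl, if_neg hk1, h2, linExt_zero_fun]
        simp [hk1]
      · rw [if_neg hl1, if_neg hk1, linExt_zero_fun, linExt_zero_fun]
        simp [hk1]
  termination_by a.length + b.length

end Convolution

/-! ### The functional `coF(M)` -/

section CoF

variable {R : Type*} [CommRing R] [Algebra ℚ R]

/-- The multinomial theorem, written as a sum over non-increasing index sequences. -/
lemma sum_antitone_muCoeff (a : ℕ → R) (s : Finset ℕ) (n : ℕ) :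
    ∑ m ∈ (Fintype.piFinset fun _ : Fin n => s).filter (fun m => Antitone m),
        muCoeff m • ∏ i : Fin n, a (m i) = ((n.factorial : ℚ)⁻¹) • (∑ x ∈ s, a x) ^ n := by
  have hcard : ∀ m : Fin n → ℕ, (Finset.univ.val.map m).card = n := fun m => by
    rw [Multiset.card_map]; simp
  rw [Finset.sum_pow, Finset.smul_sum]
  refine Finset.sum_bij (fun m _ => (⟨Finset.univ.val.map m, hcard m⟩ : Sym ℕ n)) ?_ ?_ ?_ ?_
  · intro m hm
    simp only [Finset.mem_filter, Fintype.mem_piFinset] at hm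
    refine Finset.mem_sym_iff.2 fun x hx => ?_
    obtain ⟨i, -, rfl⟩ := Multiset.mem_map.1 (show x ∈ Finset.univ.val.map m from hx)
    exact hm.1 i
  · intro m hm m' hm' h
    simp only [Finset.mem_filter] at hm hm'
    have h' : Finset.univ.val.map m = Finset.univ.val.map m' := congrArg Subtype.val h
    rw [Fin.univ_val_map, Fin.univ_val_map, Multiset.coe_eq_coe] at h'
    exact List.ofFn_injective (h'.eq_of_sortedGE hm.2.sortedGE_ofFn hm'.2.sortedGE_ofFn)
  · intro k hk
    have hlen : (k.1.sort (· ≥ ·)).length = n := by rw [Multiset.length_sort]; exact k.2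
    refine ⟨fun i => (k.1.sort (· ≥ ·)).get (i.cast hlen.symm), ?_, ?_⟩
    · simp only [Finset.mem_filter, Fintype.mem_piFinset]
      refine ⟨fun i => ?_, ?_⟩
      · rw [Finset.mem_sym_iff] at hk
        exact hk _ ((Multiset.mem_sort (r := (· ≥ ·))).1 (List.get_mem _ _))
      · have := (Multiset.pairwise_sort k.1 (· ≥ ·)).sortedGE.antitone_get
        intro i j hij
        exact this (show i.cast hlen.symm ≤ j.cast hlen.symm from hij)
    · apply Subtype.ext
      conv_rhs => rw [← Multiset.sort_eq k.1 (· ≥ ·)]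
      simp only [Fin.univ_val_map, Multiset.coe_eq_coe]
      refine List.Perm.of_eq (List.ext_get ?_ fun i h1 h2 => ?_)
      · rw [List.length_ofFn, hlen]
      · rw [List.get_ofFn]
        rfl
  · intro m hm
    have hprod : (Multiset.map a (Finset.univ.val.map m)).prod = ∏ i, a (m i) := by
      rw [Multiset.map_map]; rfl
    have hcount : ∀ v, (Finset.univ.val.map m).count v =
        (Finset.univ.filter fun i => m i = v).card := by
      intro v
      rw [Multiset.count_map, Finset.card_def, Finset.filter_val]
      simp [eq_comm]
    have hspec : (∏ v ∈ Finset.image m Finset.univ,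
        (Finset.univ.filter fun i => m i = v).card.factorial) *
          (Finset.univ.val.map m).countPerms = n.factorial := by
      have h := Nat.multinomial_spec (Finset.image m Finset.univ)
        (fun v => (Finset.univ.val.map m).count v)
      have hsum : ∑ v ∈ Finset.image m Finset.univ, (Finset.univ.val.map m).count v = n :=
        (Multiset.toFinset_sum_count_eq _).trans (hcard m)
      rw [hsum] at h
      simp only [hcount] at h
      rw [← h]
      congr 1
      rw [Multiset.countPerms, Finsupp.multinomial_eq, Multiset.toFinsupp_support]
      exact Nat.multinomial_congr fun v _ => hcount v
    have hmu : muCoeff m = (n.factorial : ℚ)⁻¹ * ((Finset.univ.val.map m).countPerms : ℚ) := by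
      have hn : (n.factorial : ℚ) ≠ 0 := by exact_mod_cast n.factorial_ne_zero
      have hq := congrArg (Nat.cast : ℕ → ℚ) hspec
      push_cast at hq
      rw [muCoeff]
      have hc : ((Finset.univ.val.map m).countPerms : ℚ) ≠ 0 := by
        intro h0
        rw [h0, mul_zero] at hq
        exact hn hq.symm
      rw [← hq, mul_inv, inv_mul_cancel_right₀ hc]
    rw [hmu]
    change _ = (n.factorial : ℚ)⁻¹ • (((Finset.univ.val.map m).countPerms : R) *
      (Multiset.map a (Finset.univ.val.map m)).prod)
    rw [hprod, mul_smul, Nat.cast_smul_eq_nsmul, nsmul_eq_mul]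

/-- `coF(M)` is supported on the powers of `z₁`, where its generating series is
`∏_{0 < m < M} exp(-a(m) X)`. -/
lemma coFword_eq (a : ℕ → R) (M : ℕ) (l : List ℕ) :
    coFword a M l = if ∀ k ∈ l, k = 1 then
      ((l.length.factorial : ℚ)⁻¹) • (-∑ x ∈ Finset.Ioo 0 M, a x) ^ l.length else 0 := by
  rw [coFword, sum_antitone_muCoeff, mul_smul_comm, ← mul_pow, neg_one_mul]

lemma isHom_coFword (a : ℕ → R) (M : ℕ) : IsHom (coFword a M) := by
  intro u v hu hv
  rw [show coFword a M = _ from funext fun l => coFword_eq a M l]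
  rw [linExt_ones_hmulW (fun n => ((n.factorial : ℚ)⁻¹) • (-∑ x ∈ Finset.Ioo 0 M, a x) ^ n)
    u v hu hv]
  beta_reduce
  by_cases h1 : ∀ k ∈ u, k = 1
  · by_cases h2 : ∀ k ∈ v, k = 1
    · rw [if_pos ⟨h1, h2⟩, if_pos h1, if_pos h2, smul_mul_smul_comm, ← pow_add,
        ← nsmul_eq_mul, ← Nat.cast_smul_eq_nsmul ℚ, smul_smul]
      congr 1
      have hq := congrArg (Nat.cast : ℕ → ℚ)
        (Nat.add_choose_mul_factorial_mul_factorial u.length v.length)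
      push_cast at hq
      have hn : ∀ n : ℕ, (n.factorial : ℚ) ≠ 0 := fun n => by exact_mod_cast n.factorial_ne_zero
      have hn1 := hn u.length
      have hn2 := hn v.length
      have hn3 := hn (u.length + v.length)
      rw [← div_eq_mul_inv, div_eq_iff hn3, ← hq, Nat.choose_symm_add]
      field_simp
    · rw [if_neg h2, if_neg (fun h => h2 h.2), mul_zero]
  · rw [if_neg h1, if_neg (fun h => h1 h.1), zero_mul]

end CoF

/-! ### The functional `F(M)` -/

section F

variable {R : Type*} [CommRing R] [Algebra ℚ R]

/-- `Σ_{M > m₁ > ⋯ > m_n > 0} f_{w₁}(m₁)⋯f_{w_n}(m_n)` for a list of words `w₁, …, w_n`. -/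
def blockSum (f : ℕ → H →ₗ[ℚ] R) (M n : ℕ) (ws : List (List ℕ)) : R :=
  ∑ m ∈ (Fintype.piFinset fun _ : Fin n => Finset.Ioo 0 M).filter (fun m => StrictAnti m),
    ∏ i : Fin n, f (m i) (zw (ws.getD (i : ℕ) []))

/-- Split according to whether the largest index is `M` or smaller. -/
lemma blockSum_succ (f : ℕ → H →ₗ[ℚ] R) (M n : ℕ) (hM : 0 < M) (w : List ℕ)
    (ws : List (List ℕ)) :
    blockSum f (M + 1) (n + 1) (w :: ws) =
      f M (zw w) * blockSum f M n ws + blockSum f M (n + 1) (w :: ws) := by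
  unfold blockSum
  rw [← Finset.sum_filter_add_sum_filter_not _ (fun m => m 0 = M)]
  congr 1
  · rw [Finset.mul_sum]
    refine Finset.sum_bij' (fun m _ => Fin.tail m) (fun m _ => Fin.cons M m) ?_ ?_ ?_ ?_ ?_
    · intro m hm
      simp only [Finset.mem_filter, Fintype.mem_piFinset, Finset.mem_Ioo] at hm ⊢
      obtain ⟨⟨h1, h2⟩, h3⟩ := hm
      refine ⟨fun i => ⟨(h1 i.succ).1, ?_⟩, fun i j hij => h2 (Fin.succ_lt_succ_iff.2 hij)⟩
      rw [← h3]
      exact h2 (Fin.succ_pos i)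
    · intro m hm
      simp only [Finset.mem_filter, Fintype.mem_piFinset, Finset.mem_Ioo] at hm ⊢
      obtain ⟨h1, h2⟩ := hm
      refine ⟨⟨fun i => ?_, ?_⟩, rfl⟩
      · refine Fin.cases ?_ (fun i => ?_) i
        · simp [hM]
        · have := h1 i
          simp only [Fin.cons_succ]
          omega
      · intro i j
        refine Fin.cases ?_ (fun i => ?_) i <;> refine Fin.cases ?_ (fun j => ?_) j
        · simp
        · intro _
          simpa using (h1 j).2
        · simp
        · intro h
          simpa using h2 (Fin.succ_lt_succ_iff.1 h)
    · intro m hm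
      simp only [Finset.mem_filter] at hm
      rw [← hm.2]
      exact Fin.cons_self_tail m
    · intro m hm
      simp
    · intro m hm
      simp only [Finset.mem_filter] at hm
      rw [Fin.prod_univ_succ, hm.2]
      simp [Fin.tail]
  · refine Finset.sum_congr ?_ fun _ _ => rfl
    ext m
    simp only [Finset.mem_filter, Fintype.mem_piFinset, Finset.mem_Ioo]
    constructor
    · rintro ⟨⟨h1, h2⟩, h3⟩
      refine ⟨fun i => ⟨(h1 i).1, ?_⟩, h2⟩
      have := h2.antitone (Fin.zero_le i)
      have := (h1 0).2
      omega
    · rintro ⟨h1, h2⟩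
      exact ⟨⟨fun i => ⟨(h1 i).1, by have := (h1 i).2; omega⟩, h2⟩, by have := (h1 0).2; omega⟩

/-- The decompositions of `l` as a concatenation of nonempty words. -/
def segs (l : List ℕ) : Finset (List (List ℕ)) :=
  Finset.univ.image fun c : Composition l.length => l.splitWrtComposition c

lemma mem_segs {l : List ℕ} {ws : List (List ℕ)} :
    ws ∈ segs l ↔ ws.flatten = l ∧ ∀ w ∈ ws, w ≠ [] := by
  simp only [segs, Finset.mem_image, Finset.mem_univ, true_and]
  constructor
  · rintro ⟨c, rfl⟩
    exact ⟨List.flatten_splitWrtComposition l c, fun w hw =>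
      List.length_pos_iff.1 (List.length_pos_of_mem_splitWrtComposition hw)⟩
  · rintro ⟨rfl, h⟩
    refine ⟨⟨ws.map List.length, ?_, ?_⟩, List.splitWrtComposition_flatten ws _ rfl⟩
    · intro i hi
      obtain ⟨w, hw, rfl⟩ := List.mem_map.1 hi
      exact List.length_pos_iff.2 (h w hw)
    · simp [List.length_flatten]

lemma segs_nil : segs [] = {[]} := by
  ext ws
  rw [mem_segs, Finset.mem_singleton]
  constructor
  · rintro ⟨h1, h2⟩
    rw [List.flatten_eq_nil_iff] at h1
    exact List.eq_nil_iff_forall_not_mem.2 fun w hw => h2 w hw (h1 w hw)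
  · rintro rfl
    simp

lemma Fword_eq_sum_segs (f : ℕ → H →ₗ[ℚ] R) (M : ℕ) (l : List ℕ) :
    Fword f M l = ∑ ws ∈ segs l, blockSum f M ws.length ws := by
  have hinj : Function.Injective fun c : Composition l.length => l.splitWrtComposition c := by
    intro c c' h
    apply Composition.ext
    rw [← List.map_length_splitWrtComposition l c, ← List.map_length_splitWrtComposition l c']
    exact congrArg _ h
  by_cases hl : l = []
  · subst hl
    rw [segs_nil]
    have hfil : ∀ s : Finset (Fin 0 → ℕ), s.filter (fun m => StrictAnti m) = s := by
      intro s
      exact Finset.filter_true_of_mem fun m _ i => i.elim0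
    simp [Fword, blockSum, hfil]
  · rw [Fword, if_neg hl, segs, Finset.sum_image hinj.injOn]
    refine Finset.sum_congr rfl fun c _ => ?_
    rw [List.length_splitWrtComposition]
    rfl

/-- `F(M+1) = f(M) ⋆ F(M)` for the deconcatenation convolution `⋆`. -/
lemma Fword_succ (f : ℕ → H →ₗ[ℚ] R) (M : ℕ) (hM : 0 < M) (h1 : f M (zw []) = 1) (l : List ℕ) :
    Fword f (M + 1) l = decSum (fun p q => f M (zw p) * Fword f M q) l := by
  -- The difference is the contribution of the index sequences starting with `M`; the first
  -- block of the decomposition is then a nonempty prefix of `l`, which `i` enumerates.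
  have key : ∑ ws ∈ segs l, (blockSum f (M + 1) ws.length ws - blockSum f M ws.length ws) =
      ∑ i ∈ Finset.range l.length, f M (zw (l.take (i + 1))) * Fword f M (l.drop (i + 1)) := by
    simp only [Fword_eq_sum_segs f M, Finset.mul_sum]
    by_cases hl : l = []
    · subst hl
      simp [segs_nil, blockSum, Finset.filter_true_of_mem, StrictAnti]
    rw [Finset.sum_sigma']
    symm
    refine Finset.sum_bij (fun x _ => l.take (x.1 + 1) :: x.2) ?_ ?_ ?_ ?_
    · rintro ⟨i, ws⟩ hx
      simp only [Finset.mem_sigma, Finset.mem_range, mem_segs] at hx ⊢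
      obtain ⟨hi, hws, hne⟩ := hx
      refine ⟨by rw [List.flatten_cons, hws, List.take_append_drop], ?_⟩
      simp only [List.mem_cons, forall_eq_or_imp]
      exact ⟨by simp [hl], hne⟩
    · rintro ⟨i, ws⟩ hx ⟨j, ws'⟩ hy h
      simp only [Finset.mem_sigma, Finset.mem_range] at hx hy
      obtain ⟨h1, h2⟩ := List.cons_eq_cons.1 h
      have h3 := congrArg List.length h1
      simp only [List.length_take] at h3
      obtain rfl : i = j := by omega
      simp only at h2
      rw [h2]
    · intro ws hws
      obtain ⟨h1, h2⟩ := mem_segs.1 hws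
      cases ws with
      | nil => exact absurd h1.symm hl
      | cons w ws =>
        have hw : 0 < w.length := List.length_pos_iff.2 (h2 w (by simp))
        rw [List.flatten_cons] at h1
        have e : w.length - 1 + 1 = w.length := by omega
        refine ⟨⟨w.length - 1, ws⟩, ?_, ?_⟩
        · simp only [Finset.mem_sigma, Finset.mem_range, mem_segs, e, ← h1]
          refine ⟨by simp; omega, by simp, fun w' hw' => h2 w' (by simp [hw'])⟩
        · simp only [e, ← h1]
          simp
    · rintro ⟨i, ws⟩ hx
      rw [List.length_cons, blockSum_succ f M _ hM]
      ring
  rw [decSum_eq_sum, Finset.sum_range_succ', ← key, Finset.sum_sub_distrib,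
    ← Fword_eq_sum_segs, ← Fword_eq_sum_segs]
  simp [h1]

lemma Fword_one (f : ℕ → H →ₗ[ℚ] R) (l : List ℕ) : Fword f 1 l = if l = [] then 1 else 0 := by
  unfold Fword
  split_ifs with hl
  · rfl
  · refine Finset.sum_eq_zero fun c _ => Finset.sum_eq_zero fun m hm => ?_
    have hc : 0 < c.length := c.length_pos_of_pos (List.length_pos_iff.2 hl)
    have := Fintype.mem_piFinset.1 (Finset.mem_filter.1 hm).1 ⟨0, hc⟩
    simp only [Finset.mem_Ioo] at this
    omega

lemma isHom_Fword (f : ℕ → H →ₗ[ℚ] R) (hf1 : ∀ m : ℕ, 0 < m → f m (zw []) = 1)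
    (hfmul : ∀ m : ℕ, 0 < m → ∀ u v : H, f m (hmul u v) = f m u * f m v)
    (M : ℕ) (hM : 0 < M) : IsHom (Fword f M) := by
  induction M, hM using Nat.le_induction with
  | base =>
    -- `F(1)` is the counit, and the empty word does not occur in a product of nonempty words.
    intro a b _ _
    rw [show Fword f 1 = _ from funext fun l => Fword_one f l]
    match a, b with
    | [], b => simp [hmulW, linExt_single]
    | k :: u, [] => simp [hmulW, linExt_single]
    | k :: u, l :: v => simp [hmulW, linExt_mapDomain, linExt_zero_fun]
  | succ M hM ih =>
    rw [show Fword f (M + 1) = _ from funext fun l => Fword_succ f M hM (hf1 M hM) l]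
    refine IsHom.conv (fun a b _ _ => ?_) ih
    have hext : linExt (fun p => f M (zw p)) = f M := by
      refine Finsupp.lhom_ext' fun l => LinearMap.ext_ring ?_
      simp [linExt, zw]
    rw [hext, ← hfmul M hM]
    simp [hmul, zw]

end F

/-- the deconcatenation convolution `F^*(M)` of `coF(M)` and `F(M)` is a
ℚ-algebra homomorphism `𝔥¹_* → R`. -/
theorem stmt17 {R : Type*} [CommRing R] [Algebra ℚ R]
    (f : ℕ → H →ₗ[ℚ] R)
    (hf1 : ∀ m : ℕ, 0 < m → f m (zw []) = 1)
    (hfmul : ∀ m : ℕ, 0 < m → ∀ u v : H, f m (hmul u v) = f m u * f m v)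
    (M : ℕ) (hM : 0 < M) (u v : H) (hu : isH1 u) (hv : isH1 v) :
    FstarL f M (hmul u v) = FstarL f M u * FstarL f M v := by
  have hom : IsHom (FstarWord f M) := by
    have h := (isHom_coFword (fun m => f m (zw [1])) M).conv (isHom_Fword f hf1 hfmul M hM)
    convert h using 1
    funext l
    rw [decSum_eq_sum, FstarWord]
  have hL : ∀ w, FstarL f M w = linExt (FstarWord f M) w := fun w => by
    rw [FstarL, linExt, Finsupp.linearCombination_apply]
  simp only [hL]
  conv_rhs => simp only [linExt, Finsupp.linearCombination_apply]
  rw [hmul]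
  simp only [Finsupp.sum, map_sum, map_smul, Finset.sum_mul_sum]
  refine Finset.sum_congr rfl fun a ha => Finset.sum_congr rfl fun b hb => ?_
  rw [hom a b (hu a ha) (hv b hb), smul_mul_smul_comm]
end
end
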